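/- Let q ≥ 3 be an integer and let G be a Class 1 graph (i.e. χ'(G) = Δ(G)) with maximum degree Δ(G) ≥ 5. If every block of G is either a bipartite graph, or a (q+1)-degenerate graph belonging to the class A(q), then the edge chromatic transformation index of G satisfies χ'_trans(G) ≤ q+1. -/

import Mathlib

/-! The theorem holds because membership in `𝒜(q)` (every subgraph with maximum degree at most `q`
is `q`-edge-colorable) makes it possible to transform color classes one at a time.

**`G` belongs to `𝒜(q)`** (`good_of_blocks`). A set of edges with all degrees at most `q` either
splits into two parts sharing at most one vertex, whose colorings can be glued after a permutation
of colors (`exists_color_glue`), or lies in a block (`exists_block`). A bipartite block is handled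
by Kőnig's theorem (`exists_color_bipartite`), the other blocks are in `𝒜(q)` by assumption.

**Moving a matching out** (`exists_matching`). Suppose `L ∈ 𝒜(q)` has maximum degree at most
`q + 1`, attained by at most two vertices. Delete an edge at each vertex of degree `q + 1`, and
color the rest with `q` colors. By counting, at most two of the colors are missing at some vertex
of `L`-degree `q` or `q + 1`. As `q ≥ 3`, some color class is a matching that covers all these
vertices.

**Walking towards a target class** (`reach_target`). Let `f`, `g` be colorings with color set `C`,
let `t ∈ C`, and let `N₂` be the class of `t` in `g`. Maintain a set `T` of `q` colors and a
matching `N` inside the union `H` of the classes with color in `T`, starting with the class of `t`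
in `f`. Call a vertex of degree at least `q` in `H - N` a defect, and keep the number of defects at
most two. A step (`reach_step`) adds one more class to `H`, giving `F`, replaces `N` by another
matching `N' ⊆ F`, and moves a matching obtained from `exists_matching` for `F - N'` out of the
`q + 1` classes; this recolors `q + 1` classes only. The new defects are among the vertices of
degree `q + 1` in `F - N'`, so they are old defects, or vertices which lost their `N`-edge.
Therefore one can

* insert an edge of `N₂` into `N`, deleting the edges of `N` that meet it (`reach_insert`), where
  the inserted edge is taken at a defect as long as there is a defect covered by `N₂`;
* remove a defect not covered by `N₂`, by adding the class of a color missing there; such a color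
  exists because `N₂` covers every vertex of degree `|C|` (`reach_missing`);
* delete an edge of `N` outside `N₂` if there is no defect (`reach_erase`).

Each of these decreases `3 |N △ N₂|` plus the number of defects, so `N = N₂` is reached without
defects. Then `N₂` can be given the color `t` while the other edges in the `q + 1` classes of
a set containing `t` are colored with the remaining `q` colors (`exists_eqv_class`). Induction on
the number of colors finishes the proof (`eqv_of_good`). -/

open SimpleGraph Set

namespace EdgeTrans

universe u v

variable {V : Type*} {W : Type*}

/-- The degree of a vertex. -/
noncomputable def deg (G : SimpleGraph V) (x : V) : ℕ :=
  (G.neighborSet x).ncard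

/-- The maximum degree `Δ(G)`. -/
noncomputable def maxDeg (G : SimpleGraph V) : ℕ :=
  ⨆ x, deg G x

/-- A proper `t`-edge-coloring of `G`, using the colors `1, …, t`. -/
def IsProperEdgeColoring (G : SimpleGraph V) (t : ℕ) (f : Sym2 V → ℕ) : Prop :=
  (∀ e ∈ G.edgeSet, f e ∈ Finset.Icc 1 t) ∧
  ∀ e₁ ∈ G.edgeSet, ∀ e₂ ∈ G.edgeSet, e₁ ≠ e₂ → (∃ x, x ∈ e₁ ∧ x ∈ e₂) → f e₁ ≠ f e₂

/-- The color class `M(f, j)`: the set of edges of `G` colored `j` by `f`. -/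
def colorClass (G : SimpleGraph V) (f : Sym2 V → ℕ) (j : ℕ) : Set (Sym2 V) :=
  {e | e ∈ G.edgeSet ∧ f e = j}

/-- `f` and `g` differ by at most `n` color classes. -/
def DifferAtMost (G : SimpleGraph V) (n : ℕ) (f g : Sym2 V → ℕ) : Prop :=
  {j : ℕ | colorClass G f j ≠ colorClass G g j}.ncard ≤ n

/-- `f` and `g` are `n`-equivalent proper `t`-edge-colorings: one can be transformed into the
other by a sequence of proper `t`-edge-colorings in which consecutive colorings differ by at
most `n` color classes. -/
def NEquiv (G : SimpleGraph V) (t n : ℕ) (f g : Sym2 V → ℕ) : Prop :=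
  ∃ (k : ℕ) (F : ℕ → Sym2 V → ℕ), 1 ≤ k ∧ F 0 = f ∧ F k = g ∧
    (∀ i ≤ k, IsProperEdgeColoring G t (F i)) ∧
    ∀ i < k, DifferAtMost G n (F i) (F (i + 1))

/-- The chromatic index `χ'(G)`. -/
noncomputable def chromIdx (G : SimpleGraph V) : ℕ :=
  sInf {t | ∃ f, IsProperEdgeColoring G t f}

/-- The edge chromatic transformation index `χ'_trans(G)`: the minimum `n ≥ 2` such that any
two proper `χ'(G)`-edge-colorings of `G` are `n`-equivalent. -/
noncomputable def transIdx (G : SimpleGraph V) : ℕ :=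
  sInf {n | 2 ≤ n ∧ ∀ f g, IsProperEdgeColoring G (chromIdx G) f →
      IsProperEdgeColoring G (chromIdx G) g → NEquiv G (chromIdx G) n f g}

/-- `v` is a cutvertex of `G`: some two other vertices are connected in `G`, but every walk
between them passes through `v`. -/
def IsCutVertex (G : SimpleGraph V) (x : V) : Prop :=
  ∃ a b : V, a ≠ x ∧ b ≠ x ∧ G.Reachable a b ∧ ∀ p : G.Walk a b, x ∈ p.support

/-- A block of `G`: a maximal connected subgraph without a cutvertex of the subgraph. -/
def IsBlock (G : SimpleGraph V) (B : G.Subgraph) : Prop :=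
  B.coe.Connected ∧ (∀ x, ¬ IsCutVertex B.coe x) ∧
    ∀ B' : G.Subgraph, B ≤ B' → B'.coe.Connected →
      (∀ x, ¬ IsCutVertex B'.coe x) → B' = B

/-- Membership in the class `𝒜(q)`: every subgraph `H` of `G` with `Δ(H) ≤ q` has a proper
`q`-edge-coloring. -/
def MemA (q : ℕ) (G : SimpleGraph V) : Prop :=
  ∀ H : SimpleGraph V, H ≤ G → maxDeg H ≤ q → ∃ f, IsProperEdgeColoring H q f

/-- `G` is `k`-degenerate: every (nonempty) subgraph of `G` contains a vertex of degree
at most `k` in the subgraph. -/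
def Degenerate (k : ℕ) (G : SimpleGraph V) : Prop :=
  ∀ H : G.Subgraph, H.verts.Nonempty → ∃ x ∈ H.verts, (H.neighborSet x).ncard ≤ k

/-- `G` has `H` as a minor (via branch sets). -/
def HasMinor (G : SimpleGraph V) (H : SimpleGraph W) : Prop :=
  ∃ F : W → Set V,
    (∀ w, (G.induce (F w)).Connected) ∧
    (∀ w₁ w₂, w₁ ≠ w₂ → Disjoint (F w₁) (F w₂)) ∧
    (∀ w₁ w₂, H.Adj w₁ w₂ → ∃ v₁ ∈ F w₁, ∃ v₂ ∈ F w₂, G.Adj v₁ v₂)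

/-- Planarity, via Wagner's characterization: no `K₅` minor and no `K₃,₃` minor. -/
def Planar (G : SimpleGraph V) : Prop :=
  ¬ HasMinor G (completeGraph (Fin 5)) ∧
  ¬ HasMinor G (completeBipartiteGraph (Fin 3) (Fin 3))

/-- Series-parallel: no `K₄` minor. -/
def SeriesParallel (G : SimpleGraph V) : Prop :=
  ¬ HasMinor G (completeGraph (Fin 4))

/-- `G` is chordless: in every cycle, any two nonconsecutive vertices are non-adjacent,
i.e. every edge of `G` joining two vertices of a cycle is an edge of the cycle. -/
def Chordless (G : SimpleGraph V) : Prop :=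
  ∀ (x : V) (c : G.Walk x x), c.IsCycle →
    ∀ a ∈ c.support, ∀ b ∈ c.support, G.Adj a b → s(a, b) ∈ c.edges

/-- The wheel graph with hub `none` and cycle `ZMod n`. -/
def wheelGraph (n : ℕ) : SimpleGraph (Option (ZMod n)) :=
  SimpleGraph.fromRel (fun a b =>
    a = none ∨ ∃ i : ZMod n, a = some i ∧ b = some (i + 1))

/-- `G` is a wheel graph. -/
def IsWheel (G : SimpleGraph V) : Prop :=
  ∃ n : ℕ, 3 ≤ n ∧ Nonempty (G ≃g wheelGraph n)

/-- `G` is a Halin graph: `G` is planar and is the edge-disjoint union of a spanning tree `T`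
on at least four vertices having no vertex of degree two, and a cycle through exactly the
leaves of `T`. -/
def IsHalin (G : SimpleGraph V) : Prop :=
  Planar G ∧ 4 ≤ Nat.card V ∧
  ∃ T : SimpleGraph V, T ≤ G ∧ T.IsTree ∧ (∀ x : V, deg T x ≠ 2) ∧
    ∃ (x₀ : V) (c : G.Walk x₀ x₀), c.IsCycle ∧
      (∀ e : Sym2 V, e ∈ c.edges ↔ e ∈ G.edgeSet \ T.edgeSet) ∧
      (∀ u : V, u ∈ c.support ↔ deg T u = 1)

/-- The subgraph `G(f,g,t)`: the (spanning) subgraph of `G` with edge set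
`M(f,t) △ M(g,t)`. -/
def diffGraph (G : SimpleGraph V) (t : ℕ) (f g : Sym2 V → ℕ) : SimpleGraph V :=
  SimpleGraph.fromEdgeSet (symmDiff (colorClass G f t) (colorClass G g t))

/-- The walk `p` (a path or a cycle) is an entire connected component of its ambient graph:
every edge incident with a vertex of `p` is an edge of `p`. -/
def IsComponentWalk {G : SimpleGraph V} {u x : V} (p : G.Walk u x) : Prop :=
  ∀ a ∈ p.support, ∀ b, G.Adj a b → s(a, b) ∈ p.edges

/-- The color `i` is missing at `x` under `f`. -/
def MissingAt (G : SimpleGraph V) (f : Sym2 V → ℕ) (i : ℕ) (x : V) : Prop :=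
  ∀ e ∈ G.edgeSet, x ∈ e → f e ≠ i

/-- The path `p` is alternately colored with colors `a` and `b` under `f`
(an `(a,b)`-colored path). -/
def AltColored (f : Sym2 V → ℕ) (a b : ℕ) {G : SimpleGraph V} {u x : V}
    (p : G.Walk u x) : Prop :=
  (∀ i : Fin p.edges.length, f (p.edges.get i) = if Even i.1 then a else b) ∨
  (∀ i : Fin p.edges.length, f (p.edges.get i) = if Even i.1 then b else a)

/-- The path `p` is `t`-alternating: of any two consecutive edges, one is colored `t`. -/
def AltPath (f : Sym2 V → ℕ) (t : ℕ) {G : SimpleGraph V} {u x : V}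
    (p : G.Walk u x) : Prop :=
  ∀ (i : ℕ) (h : i + 1 < p.edges.length),
    f (p.edges.get ⟨i, Nat.lt_of_succ_lt h⟩) = t ∨ f (p.edges.get ⟨i + 1, h⟩) = t

/-- The cycle `c` is `t`-alternating: of any two (cyclically) consecutive edges, one is
colored `t`. -/
def IsAltCycle (f : Sym2 V → ℕ) (t : ℕ) {G : SimpleGraph V} {u : V}
    (c : G.Walk u u) : Prop :=
  ∀ i : Fin c.edges.length,
    f (c.edges.get i) = t ∨
    f (c.edges.get ⟨(i.1 + 1) % c.edges.length, Nat.mod_lt _ i.pos⟩) = t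

/-- `G` is 2-connected. -/
def TwoConnected (G : SimpleGraph V) : Prop :=
  G.Connected ∧ 3 ≤ Nat.card V ∧ ∀ x, ¬ IsCutVertex G x

/-- The union of the cycle `c` and the ears `P j` for `j < i`, as a subgraph. -/
noncomputable def earPrefix {G : SimpleGraph V} {v₀ : V} (c : G.Walk v₀ v₀) {n : ℕ}
    {x y : Fin n → V} (P : ∀ i : Fin n, G.Walk (x i) (y i)) (i : ℕ) : G.Subgraph :=
  c.toSubgraph ⊔ ⨆ j : Fin n, ⨆ _ : (j : ℕ) < i, (P j).toSubgraph

/-- `c, P 0, …, P (n-1)` is a `t`-alternating ear decomposition with respect to the cycle `c`: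
`c` is a `t`-alternating cycle, and each `P i` is a `(cᵢ, t)`-colored path (`cᵢ ≤ t - 1`) which
is an ear of `c ∪ P 0 ∪ … ∪ P i`, i.e. its endpoints lie in the previous part and its internal
vertices have degree 2 in `c ∪ P 0 ∪ … ∪ P i`. -/
def IsEarDecomp (G : SimpleGraph V) (f : Sym2 V → ℕ) (t : ℕ) {v₀ : V} (c : G.Walk v₀ v₀)
    (n : ℕ) (x y : Fin n → V) (P : ∀ i : Fin n, G.Walk (x i) (y i)) : Prop :=
  c.IsCycle ∧ IsAltCycle f t c ∧
  ∀ i : Fin n,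
    (P i).IsPath ∧ 1 ≤ (P i).length ∧
    (∃ ci : ℕ, ci ≤ t - 1 ∧ AltColored f ci t (P i)) ∧
    x i ∈ (earPrefix c P (i : ℕ)).verts ∧ y i ∈ (earPrefix c P (i : ℕ)).verts ∧
    ∀ a ∈ (P i).support, a ≠ x i → a ≠ y i →
      ((earPrefix c P ((i : ℕ) + 1)).neighborSet a).ncard = 2

/-- The line graph of `G`. -/
def lineGr (G : SimpleGraph V) : SimpleGraph G.edgeSet :=
  SimpleGraph.fromRel (fun e₁ e₂ => ∃ x, x ∈ (e₁ : Sym2 V) ∧ x ∈ (e₂ : Sym2 V))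

/-- The clique number (in `ℕ∞`). -/
noncomputable def cliqueNumE (G : SimpleGraph V) : ℕ∞ :=
  sSup {n : ℕ∞ | ∃ (m : ℕ) (s : Finset V), n = (m : ℕ∞) ∧ G.IsNClique m s}

/-- `G` is a perfect graph: every induced subgraph has chromatic number equal to its
clique number. -/
def IsPerfect (G : SimpleGraph V) : Prop :=
  ∀ s : Set V, (G.induce s).chromaticNumber = cliqueNumE (G.induce s)

/-- A partition of the vertex set of `G` into `n` cliques, each of size `sz`. -/
def IsCliquePartition (G : SimpleGraph V) (n sz : ℕ) (P : Set (Set V)) : Prop :=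
  P.ncard = n ∧ (∀ s ∈ P, G.IsClique s ∧ s.ncard = sz) ∧
  ⋃₀ P = Set.univ ∧ P.Pairwise fun s₁ s₂ => Disjoint s₁ s₂

/-- A proper vertex `n`-coloring of `G`, viewed as a partition of the vertex set into `n`
independent sets (color classes). -/
def IsIndepPartition (G : SimpleGraph V) (n : ℕ) (P : Set (Set V)) : Prop :=
  P.ncard = n ∧ (∀ s ∈ P, ∀ a ∈ s, ∀ b ∈ s, ¬ G.Adj a b) ∧
  ⋃₀ P = Set.univ ∧ P.Pairwise fun s₁ s₂ => Disjoint s₁ s₂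

/-- The graph `H(p,n)`: vertex classes `V_1, …, V_{2n}` of size `p` (indexed here by
`ZMod (2n)`), with two vertices adjacent iff they lie in the same class or in (cyclically)
consecutive classes. -/
def Hgraph (p n : ℕ) : SimpleGraph (ZMod (2 * n) × Fin p) :=
  SimpleGraph.fromRel (fun a b => a.1 = b.1 ∨ a.1 + 1 = b.1)

/-- The clique partition `{C_1, …, C_n}` of `H(p,n)`, `C_i = V_{2i-1} ∪ V_{2i}`. -/
def Cpart (p n : ℕ) : Set (Set (ZMod (2 * n) × Fin p)) :=
  {s | ∃ i : Fin n, s = {x | x.1 = ((2 * (i : ℕ) : ℕ) : ZMod (2 * n)) ∨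
      x.1 = ((2 * (i : ℕ) + 1 : ℕ) : ZMod (2 * n))}}

/-- The clique partition `{R_1, …, R_n}` of `H(p,n)`, `R_1 = V_{2n} ∪ V_1` and
`R_i = V_{2i-2} ∪ V_{2i-1}`. -/
def Rpart (p n : ℕ) : Set (Set (ZMod (2 * n) × Fin p)) :=
  {s | ∃ i : Fin n, s = {x | x.1 = ((2 * (i : ℕ) : ℕ) : ZMod (2 * n)) - 1 ∨
      x.1 = ((2 * (i : ℕ) : ℕ) : ZMod (2 * n))}}

/-- A multigraph on vertices `α` with edges `β`: each edge has two distinct endpoints. -/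
structure Multigraph (α : Type u) (β : Type v) where
  ends : β → Sym2 α
  not_isDiag : ∀ e, ¬ (ends e).IsDiag

namespace Multigraph

variable {α : Type u} {β : Type v}

/-- A proper `t`-edge-coloring of a multigraph, with colors `1, …, t`. -/
def IsProper (G : Multigraph α β) (t : ℕ) (f : β → ℕ) : Prop :=
  (∀ e, f e ∈ Finset.Icc 1 t) ∧
  ∀ e₁ e₂ : β, e₁ ≠ e₂ → (∃ x, x ∈ G.ends e₁ ∧ x ∈ G.ends e₂) → f e₁ ≠ f e₂

/-- The color class `M(f,j)` of a multigraph edge coloring. -/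
def mColorClass (f : β → ℕ) (j : ℕ) : Set β := {e | f e = j}

/-- `f` and `g` differ by at most `n` color classes. -/
def MDifferAtMost (n : ℕ) (f g : β → ℕ) : Prop :=
  {j : ℕ | mColorClass f j ≠ mColorClass g j}.ncard ≤ n

/-- `n`-equivalence of proper `t`-edge-colorings of a multigraph. -/
def MNEquiv (G : Multigraph α β) (t n : ℕ) (f g : β → ℕ) : Prop :=
  ∃ (k : ℕ) (F : ℕ → β → ℕ), 1 ≤ k ∧ F 0 = f ∧ F k = g ∧
    (∀ i ≤ k, G.IsProper t (F i)) ∧ ∀ i < k, MDifferAtMost n (F i) (F (i + 1))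

/-- The chromatic index of a multigraph. -/
noncomputable def mChromIdx (G : Multigraph α β) : ℕ :=
  sInf {t | ∃ f, G.IsProper t f}

/-- The edge chromatic transformation index of a multigraph. -/
noncomputable def mTransIdx (G : Multigraph α β) : ℕ :=
  sInf {n | 2 ≤ n ∧ ∀ f g, G.IsProper G.mChromIdx f → G.IsProper G.mChromIdx g →
      G.MNEquiv G.mChromIdx n f g}

/-- The degree of a vertex in a multigraph. -/
noncomputable def mDeg (G : Multigraph α β) (x : α) : ℕ := {e | x ∈ G.ends e}.ncard

/-- The underlying simple graph of a multigraph. -/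
def toSimple (G : Multigraph α β) : SimpleGraph α :=
  SimpleGraph.fromEdgeSet (Set.range G.ends)

end Multigraph

/-! ### Colorings of edge sets -/

section EdgeSets

open scoped Classical

/-- The number of edges of the finite edge set `E` at the vertex `v`, i.e. the degree of `v` in
the graph with edge set `E`. -/
noncomputable def ec (E : Finset (Sym2 V)) (v : V) : ℕ :=
  (E.filter (fun e => v ∈ e)).card

/-- `f` is a proper edge coloring of the edge set `E` with colors from `C`. The color set is
arbitrary, so that a color class can be removed together with its color. -/
def ProperOn (E : Finset (Sym2 V)) (C : Finset ℕ) (f : Sym2 V → ℕ) : Prop :=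
  (∀ e ∈ E, f e ∈ C) ∧
  ∀ e₁ ∈ E, ∀ e₂ ∈ E, e₁ ≠ e₂ → (∃ x, x ∈ e₁ ∧ x ∈ e₂) → f e₁ ≠ f e₂

/-- The class `𝒜(q)` for edge sets: every subset of `E` with all degrees at most `q` has a proper
`q`-edge-coloring. -/
def Good (q : ℕ) (E : Finset (Sym2 V)) : Prop :=
  ∀ E' ⊆ E, (∀ v, ec E' v ≤ q) → ∃ f, ProperOn E' (Finset.Icc 1 q) f

/-- `N` is a matching. -/
def IsMat (N : Finset (Sym2 V)) : Prop := ∀ v, ec N v ≤ 1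

lemma ec_mono {A B : Finset (Sym2 V)} (h : A ⊆ B) (v : V) : ec A v ≤ ec B v :=
  Finset.card_le_card (Finset.filter_subset_filter _ h)

lemma ec_sdiff_add {A E : Finset (Sym2 V)} (h : A ⊆ E) (v : V) :
    ec (E \ A) v + ec A v = ec E v := by
  unfold ec
  rw [← Finset.card_union_of_disjoint]
  · congr 1
    ext e
    simp only [Finset.mem_union, Finset.mem_filter, Finset.mem_sdiff]
    have := @h e
    tauto
  · rw [Finset.disjoint_left]
    intro e
    simp only [Finset.mem_filter, Finset.mem_sdiff]
    tauto

lemma ec_pos_iff {E : Finset (Sym2 V)} {v : V} : 0 < ec E v ↔ ∃ e ∈ E, v ∈ e := by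
  simp [ec, Finset.card_pos, Finset.Nonempty]

lemma ec_eq_zero_iff {E : Finset (Sym2 V)} {v : V} : ec E v = 0 ↔ ∀ e ∈ E, v ∉ e := by
  simp [ec, Finset.filter_eq_empty_iff]

lemma IsMat.mono {A B : Finset (Sym2 V)} (hB : IsMat B) (h : A ⊆ B) : IsMat A :=
  fun v => (ec_mono h v).trans (hB v)

lemma IsMat.eq {N : Finset (Sym2 V)} (hN : IsMat N) {e₁ e₂ : Sym2 V} (h₁ : e₁ ∈ N) (h₂ : e₂ ∈ N)
    {x : V} (hx₁ : x ∈ e₁) (hx₂ : x ∈ e₂) : e₁ = e₂ :=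
  Finset.card_le_one.1 (hN x) e₁ (by simp [h₁, hx₁]) e₂ (by simp [h₂, hx₂])

lemma isMat_of_eq {N : Finset (Sym2 V)}
    (h : ∀ e₁ ∈ N, ∀ e₂ ∈ N, ∀ x, x ∈ e₁ → x ∈ e₂ → e₁ = e₂) : IsMat N := by
  intro v
  refine Finset.card_le_one.2 ?_
  intro a ha b hb
  simp only [Finset.mem_filter] at ha hb
  exact h a ha.1 b hb.1 v ha.2 hb.2

lemma ProperOn.mono {E E' : Finset (Sym2 V)} {C C' : Finset ℕ} {f : Sym2 V → ℕ}
    (h : ProperOn E C f) (hE : E' ⊆ E) (hC : ∀ e ∈ E', f e ∈ C') : ProperOn E' C' f :=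
  ⟨hC, fun e₁ h₁ e₂ h₂ => h.2 e₁ (hE h₁) e₂ (hE h₂)⟩

lemma ProperOn.inj {E : Finset (Sym2 V)} {C : Finset ℕ} {f : Sym2 V → ℕ}
    (h : ProperOn E C f) {e₁ e₂ : Sym2 V} (h₁ : e₁ ∈ E) (h₂ : e₂ ∈ E) {x : V}
    (hx₁ : x ∈ e₁) (hx₂ : x ∈ e₂) (hf : f e₁ = f e₂) : e₁ = e₂ := by
  by_contra hne
  exact h.2 e₁ h₁ e₂ h₂ hne ⟨x, hx₁, hx₂⟩ hf

lemma ProperOn.ec_filter_le {E : Finset (Sym2 V)} {C : Finset ℕ} {f : Sym2 V → ℕ}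
    (h : ProperOn E C f) (U : Finset ℕ) (v : V) : ec (E.filter (f · ∈ U)) v ≤ U.card := by
  refine Finset.card_le_card_of_injOn f ?_ ?_
  · intro e he
    simp only [Finset.coe_filter, Finset.mem_filter, Set.mem_ofPred_eq] at he
    exact he.1.2
  · intro e₁ h₁ e₂ h₂ hf
    simp only [Finset.coe_filter, Finset.mem_filter, Set.mem_ofPred_eq] at h₁ h₂
    exact h.inj h₁.1.1 h₂.1.1 h₁.2 h₂.2 hf

lemma ProperOn.isMat_class {E : Finset (Sym2 V)} {C : Finset ℕ} {f : Sym2 V → ℕ}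
    (h : ProperOn E C f) (a : ℕ) : IsMat (E.filter (f · = a)) := by
  refine isMat_of_eq ?_
  intro e₁ h₁ e₂ h₂ x hx₁ hx₂
  simp only [Finset.mem_filter] at h₁ h₂
  exact h.inj h₁.1 h₂.1 hx₁ hx₂ (h₁.2.trans h₂.2.symm)

/-- If fewer than `C.card` edges of `E` meet `v`, then some color of `C` is missing at `v`. -/
lemma exists_missing {E : Finset (Sym2 V)} {C : Finset ℕ} (f : Sym2 V → ℕ) {v : V}
    (h : ec E v < C.card) : ∃ b ∈ C, ∀ e ∈ E, v ∈ e → f e ≠ b := by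
  obtain ⟨b, hb, hb'⟩ := Finset.exists_mem_notMem_of_card_lt_card
    (lt_of_le_of_lt (Finset.card_image_le (s := E.filter (fun e => v ∈ e)) (f := f)) h)
  refine ⟨b, hb, fun e he hv hf => hb' ?_⟩
  exact Finset.mem_image.2 ⟨e, by simp [he, hv], hf⟩

/-- Recoloring the edges whose color lies in `U` with the colors of `U`. -/
lemma ProperOn.recolor {E : Finset (Sym2 V)} {C U : Finset ℕ} {f φ : Sym2 V → ℕ}
    (h : ProperOn E C f) (hU : U ⊆ C) (hφ : ProperOn (E.filter (f · ∈ U)) U φ) :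
    ProperOn E C (fun e => if f e ∈ U then φ e else f e) := by
  constructor
  · intro e he
    by_cases hf : f e ∈ U
    · simpa [hf] using hU (hφ.1 e (by simp [he, hf]))
    · simpa [hf] using h.1 e he
  · intro e₁ h₁ e₂ h₂ hne hx
    by_cases hf₁ : f e₁ ∈ U <;> by_cases hf₂ : f e₂ ∈ U
    · simpa [hf₁, hf₂] using hφ.2 e₁ (by simp [h₁, hf₁]) e₂ (by simp [h₂, hf₂]) hne hx
    · have := hφ.1 e₁ (by simp [h₁, hf₁])
      simp only [hf₁, hf₂, if_true, if_false]
      rintro h'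
      exact hf₂ (h' ▸ this)
    · have := hφ.1 e₂ (by simp [h₂, hf₂])
      simp only [hf₁, hf₂, if_true, if_false]
      rintro h'
      exact hf₁ (h' ▸ this)
    · simpa [hf₁, hf₂] using h.2 e₁ h₁ e₂ h₂ hne hx

/-- Coloring a set `A` of edges with a color `a` on top of a coloring of the other edges. -/
lemma ProperOn.extend_class {F A : Finset (Sym2 V)} {C : Finset ℕ} {a : ℕ} {φ : Sym2 V → ℕ}
    (hA : IsMat A) (ha : a ∉ C) (h : ProperOn (F \ A) C φ) :
    ProperOn F (insert a C) (fun e => if e ∈ A then a else φ e) := by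
  constructor
  · intro e he
    by_cases hf : e ∈ A
    · simp [hf]
    · simpa [hf] using Or.inr (h.1 e (by simp [he, hf]))
  · intro e₁ h₁ e₂ h₂ hne hx
    by_cases hf₁ : e₁ ∈ A <;> by_cases hf₂ : e₂ ∈ A
    · obtain ⟨x, hx₁, hx₂⟩ := hx
      exact absurd (hA.eq hf₁ hf₂ hx₁ hx₂) hne
    · have := h.1 e₂ (by simp [h₂, hf₂])
      simp only [hf₁, hf₂, if_true, if_false]
      rintro rfl
      exact ha this
    · have := h.1 e₁ (by simp [h₁, hf₁])
      simp only [hf₁, hf₂, if_true, if_false]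
      rintro rfl
      exact ha this
    · simpa [hf₁, hf₂] using h.2 e₁ (by simp [h₁, hf₁]) e₂ (by simp [h₂, hf₂]) hne hx

lemma ProperOn.comp_injOn {E : Finset (Sym2 V)} {C C' : Finset ℕ} {f : Sym2 V → ℕ} {σ : ℕ → ℕ}
    (h : ProperOn E C f) (hσ : ∀ c ∈ C, σ c ∈ C') (hi : Set.InjOn σ C) :
    ProperOn E C' (σ ∘ f) := by
  refine ⟨fun e he => hσ _ (h.1 e he), fun e₁ h₁ e₂ h₂ hne hx hf => ?_⟩
  exact h.2 e₁ h₁ e₂ h₂ hne hx (hi (h.1 e₁ h₁) (h.1 e₂ h₂) hf)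

lemma exists_injOn_of_card {S T : Finset ℕ} (h : S.card = T.card) :
    ∃ σ : ℕ → ℕ, (∀ c ∈ S, σ c ∈ T) ∧ Set.InjOn σ S := by
  refine ⟨fun n => if hn : n ∈ S then Finset.equivOfCardEq h ⟨n, hn⟩ else 0, ?_, ?_⟩
  · intro c hc
    simp [hc]
  · intro a ha b hb hab
    have ha' : a ∈ S := ha
    have hb' : b ∈ S := hb
    simp only [ha', hb', dif_pos] at hab
    simpa using (Finset.equivOfCardEq h).injective (Subtype.ext hab)

lemma Good.mono {q : ℕ} {E E' : Finset (Sym2 V)} (h : Good q E) (hE : E' ⊆ E) : Good q E' :=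
  fun F hF => h F (hF.trans hE)

/-- In a graph of `𝒜(q)`, a subgraph with degrees at most `q` can be colored with any prescribed
`q` colors. -/
lemma Good.color {q : ℕ} {E E' : Finset (Sym2 V)} {T : Finset ℕ} (h : Good q E) (hE : E' ⊆ E)
    (hd : ∀ v, ec E' v ≤ q) (hT : T.card = q) : ∃ φ, ProperOn E' T φ := by
  obtain ⟨φ, hφ⟩ := h E' hE hd
  obtain ⟨σ, h₁, h₂⟩ := exists_injOn_of_card (S := Finset.Icc 1 q) (T := T) (by simp [hT])
  exact ⟨σ ∘ φ, hφ.comp_injOn h₁ h₂⟩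

/-- `f` and `g` are proper colorings of `E` with colors from `C` that differ in at most `n`
color classes, all of them with colors in `U`. -/
def Step (E : Finset (Sym2 V)) (C : Finset ℕ) (n : ℕ) (f g : Sym2 V → ℕ) : Prop :=
  ProperOn E C f ∧ ProperOn E C g ∧
    ∃ U : Finset ℕ, U.card ≤ n ∧ ∀ e ∈ E, ∀ j ∉ U, (f e = j ↔ g e = j)

/-- `n`-equivalence of colorings of `E` with colors from `C`. -/
def Eqv (E : Finset (Sym2 V)) (C : Finset ℕ) (n : ℕ) (f g : Sym2 V → ℕ) : Prop :=
  Relation.ReflTransGen (Step E C n) f g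

lemma step_recolor {E : Finset (Sym2 V)} {C U : Finset ℕ} {n : ℕ} {f φ : Sym2 V → ℕ}
    (h : ProperOn E C f) (hU : U ⊆ C) (hn : U.card ≤ n)
    (hφ : ProperOn (E.filter (f · ∈ U)) U φ) :
    Step E C n f (fun e => if f e ∈ U then φ e else f e) := by
  refine ⟨h, h.recolor hU hφ, U, hn, fun e he j hj => ?_⟩
  by_cases hf : f e ∈ U
  · have := hφ.1 e (by simp [he, hf])
    simp only [hf, if_true]
    constructor
    · rintro rfl; exact absurd hf hj
    · rintro rfl; exact absurd this hj
  · simp [hf]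

/-! ### A matching covering the vertices of large degree -/

lemma card_mem_sym2_le [Fintype V] (e : Sym2 V) :
    (Finset.univ.filter (fun v => v ∈ e)).card ≤ 2 := by
  induction e using Sym2.ind with
  | _ a b =>
    refine (Finset.card_le_card (t := {a, b}) ?_).trans Finset.card_le_two
    intro v
    simp

lemma sum_ec_le [Fintype V] (R : Finset (Sym2 V)) : ∑ v, ec R v ≤ 2 * R.card := by
  have h : ∀ v, ec R v = ∑ e ∈ R, if v ∈ e then 1 else 0 := fun v => by
    rw [ec, Finset.card_filter]
  simp only [h]
  rw [Finset.sum_comm, mul_comm, ← smul_eq_mul]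
  refine Finset.sum_le_card_nsmul _ _ _ fun e _ => ?_
  rw [← Finset.card_filter]
  exact card_mem_sym2_le e

/-- If `L ∈ 𝒜(q)` has maximum degree at most `q + 1` and at most two vertices of degree `q + 1`,
then some matching `A ⊆ L` covers all vertices of degree `q` or `q + 1`. For the proof, delete one
edge at each vertex of degree `q + 1` and color the rest with `q` colors: the vertices to be
covered miss at most two colors in total, so one of the `q ≥ 3` color classes covers all of
them. -/
lemma exists_matching [Fintype V] {q : ℕ} {L : Finset (Sym2 V)} (hG : Good q L) (hq : 3 ≤ q)
    (hL : ∀ v, ec L v ≤ q + 1)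
    (hD : (Finset.univ.filter (fun v => q < ec L v)).card ≤ 2) :
    ∃ A ⊆ L, IsMat A ∧ ∀ v, q ≤ ec L v → ec (L \ A) v + 1 = ec L v := by
  set D := Finset.univ.filter (fun v => q < ec L v) with hDdef
  have hr : ∀ v, ∃ e, v ∈ D → e ∈ L ∧ v ∈ e := by
    intro v
    by_cases hv : v ∈ D
    · have : 0 < ec L v := by
        have : q < ec L v := by simpa [hDdef] using hv
        omega
      obtain ⟨e, he, hve⟩ := ec_pos_iff.1 this
      exact ⟨e, fun _ => ⟨he, hve⟩⟩
    · exact ⟨s(v, v), fun h => absurd h hv⟩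
  choose r hr using hr
  set R := D.image r with hR
  have hRL : R ⊆ L := by
    intro e he
    obtain ⟨v, hv, rfl⟩ := Finset.mem_image.1 he
    exact (hr v hv).1
  have hRD : R.card ≤ D.card := Finset.card_image_le
  have hRv : ∀ v ∈ D, 0 < ec R v := fun v hv =>
    ec_pos_iff.2 ⟨r v, Finset.mem_image_of_mem _ hv, (hr v hv).2⟩
  have hsum : ∀ v, ec (L \ R) v + ec R v = ec L v := ec_sdiff_add hRL
  have hMq : ∀ v, ec (L \ R) v ≤ q := by
    intro v
    have h₁ := hsum v
    have h₂ := hL v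
    by_cases hv : v ∈ D
    · have := hRv v hv
      omega
    · have : ¬ q < ec L v := by simpa [hDdef] using hv
      omega
  obtain ⟨φ, hφ⟩ := hG (L \ R) Finset.sdiff_subset hMq
  let miss : V → Finset ℕ := fun v => if q ≤ ec L v then
    Finset.Icc 1 q \ ((L \ R).filter (fun e => v ∈ e)).image φ else ∅
  have hmiss : ∀ v, (miss v).card + (if v ∈ D then 1 else 0) ≤ ec R v := by
    intro v
    have h₁ := hsum v
    have h₂ := hL v
    by_cases hv : q ≤ ec L v
    · have hc : (((L \ R).filter (fun e => v ∈ e)).image φ).card = ec (L \ R) v := by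
        refine Finset.card_image_of_injOn ?_
        intro e₁ he₁ e₂ he₂ hf
        simp only [Finset.coe_filter, Set.mem_ofPred_eq] at he₁ he₂
        exact hφ.inj he₁.1 he₂.1 he₁.2 he₂.2 hf
      have hs : ((L \ R).filter (fun e => v ∈ e)).image φ ⊆ Finset.Icc 1 q := by
        intro c hc
        obtain ⟨e, he, rfl⟩ := Finset.mem_image.1 hc
        exact hφ.1 e (Finset.mem_filter.1 he).1
      have : (miss v).card = q - ec (L \ R) v := by
        simp only [miss, hv, if_true]
        rw [Finset.card_sdiff_of_subset hs, hc]
        simp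
      rw [this]
      have := hMq v
      split_ifs with hvD
      · have : q < ec L v := by simpa [hDdef] using hvD
        omega
      · have : ¬ q < ec L v := by simpa [hDdef] using hvD
        omega
    · have : v ∉ D := by
        simp only [hDdef, Finset.mem_filter, Finset.mem_univ, true_and]
        omega
      simp [miss, hv, this]
  have htot : (Finset.univ.biUnion miss).card + D.card ≤ 2 * R.card := by
    calc (Finset.univ.biUnion miss).card + D.card
        ≤ ∑ v, (miss v).card + ∑ v, (if v ∈ D then 1 else 0) := by
          refine Nat.add_le_add Finset.card_biUnion_le (le_of_eq ?_)
          simp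
      _ = ∑ v, ((miss v).card + (if v ∈ D then 1 else 0)) := Finset.sum_add_distrib.symm
      _ ≤ ∑ v, ec R v := Finset.sum_le_sum fun v _ => hmiss v
      _ ≤ 2 * R.card := sum_ec_le R
  obtain ⟨c, hc, hc'⟩ := Finset.exists_mem_notMem_of_card_lt_card
    (s := Finset.univ.biUnion miss) (t := Finset.Icc 1 q) (by
      rw [Nat.card_Icc]
      omega)
  refine ⟨(L \ R).filter (φ · = c), (Finset.filter_subset _ _).trans Finset.sdiff_subset,
    hφ.isMat_class c, fun v hv => ?_⟩
  have hcv : c ∉ miss v := fun h => hc' (Finset.mem_biUnion.2 ⟨v, Finset.mem_univ _, h⟩)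
  simp only [miss, hv, if_true, Finset.mem_sdiff, hc, true_and, not_not] at hcv
  obtain ⟨e, he, rfl⟩ := Finset.mem_image.1 hcv
  have h₁ := ec_sdiff_add (A := (L \ R).filter (φ · = φ e))
    ((Finset.filter_subset _ _).trans Finset.sdiff_subset) v
  have h₂ := hφ.isMat_class (φ e) v
  have h₃ : 0 < ec ((L \ R).filter (φ · = φ e)) v := by
    rw [Finset.mem_filter] at he
    exact ec_pos_iff.2 ⟨e, by simp [he.1], he.2⟩
  omega

/-! ### Transforming one color class -/

/-- If the edges with colors in `U`, `|U| = q + 1`, split into a matching `A` and a graph of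
maximum degree at most `q` from `𝒜(q)`, then they can be recolored within `U` so that `A` is the
class of a prescribed color `t ∈ U`. -/
lemma exists_resplit {q : ℕ} {E A : Finset (Sym2 V)} {C U : Finset ℕ} {f : Sym2 V → ℕ} {t : ℕ}
    (hG : Good q E) (hf : ProperOn E C f) (hU : U ⊆ C) (hUc : U.card = q + 1) (ht : t ∈ U)
    (hA : IsMat A) (hAF : A ⊆ E.filter (f · ∈ U))
    (hd : ∀ v, ec (E.filter (f · ∈ U) \ A) v ≤ q) :
    ∃ f', Step E C (q + 1) f f' ∧ (∀ e ∈ E, f' e = t ↔ e ∈ A) ∧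
      E.filter (f' · ∈ U.erase t) = E.filter (f · ∈ U) \ A := by
  obtain ⟨φ, hφ⟩ := hG.color (T := U.erase t)
    (Finset.sdiff_subset.trans (Finset.filter_subset _ _)) hd
    (by rw [Finset.card_erase_of_mem ht, hUc]; rfl)
  have hψ := hφ.extend_class hA (Finset.notMem_erase t U)
  rw [Finset.insert_erase ht] at hψ
  have hφU : ∀ e ∈ E, f e ∈ U → e ∉ A → φ e ∈ U.erase t := fun e he heU heA =>
    hφ.1 e (Finset.mem_sdiff.2 ⟨Finset.mem_filter.2 ⟨he, heU⟩, heA⟩)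
  have hAU : ∀ e ∈ A, f e ∈ U := fun e he => (Finset.mem_filter.1 (hAF he)).2
  refine ⟨_, step_recolor hf hU hUc.le hψ, ?_, ?_⟩
  · intro e he
    by_cases heU : f e ∈ U
    · by_cases heA : e ∈ A
      · simp [heU, heA]
      · simpa [heU, heA] using (Finset.mem_erase.1 (hφU e he heU heA)).1
    · have h₁ : f e ≠ t := fun h => heU (h ▸ ht)
      have h₂ : e ∉ A := fun h => heU (hAU e h)
      simp [heU, h₁, h₂]
  · ext e
    simp only [Finset.mem_filter, Finset.mem_sdiff, and_assoc]
    refine and_congr_right fun he => ?_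
    by_cases heU : f e ∈ U
    · by_cases heA : e ∈ A
      · simp [heU, heA]
      · simpa [heU, heA] using hφU e he heU heA
    · simp [heU]

/-- The vertices `v` that are in the way of making the matching `N` a color class, where `H` is
the graph formed by `q` of the color classes: those of degree at least `q` in `H - N`. -/
noncomputable def defects [Fintype V] (q : ℕ) (H N : Finset (Sym2 V)) : Finset V :=
  Finset.univ.filter (fun v => q ≤ ec (H \ N) v)

/-- From the coloring `f₀` one can reach a coloring in which the matching `N` lies in the union of
`q` color classes, with at most `k` defects. -/
def Reach [Fintype V] (q : ℕ) (E : Finset (Sym2 V)) (C : Finset ℕ) (f₀ : Sym2 V → ℕ)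
    (N : Finset (Sym2 V)) (k : ℕ) : Prop :=
  ∃ (f : Sym2 V → ℕ) (T : Finset ℕ), Eqv E C (q + 1) f₀ f ∧ ProperOn E C f ∧ T ⊆ C ∧
    T.card = q ∧ N ⊆ E.filter (f · ∈ T) ∧ IsMat N ∧ (defects q (E.filter (f · ∈ T)) N).card ≤ k

/-- One recoloring step: adding one more color class to the current `q` classes, passing from the
matching `N` to a matching `N'`, and moving a suitable matching out of the `q + 1` classes, one
reaches `N'`. Only the vertices of degree `q + 1` in `F - N'` can become defects, where `F` is the
union of the `q + 1` classes. -/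
lemma reach_step [Fintype V] {q : ℕ} {E : Finset (Sym2 V)} {C T : Finset ℕ} {f₀ f : Sym2 V → ℕ}
    {b : ℕ} {N' : Finset (Sym2 V)} (hG : Good q E) (hq : 3 ≤ q)
    (h₀ : Eqv E C (q + 1) f₀ f) (hf : ProperOn E C f) (hT : T ⊆ C) (hTc : T.card = q)
    (hb : b ∈ C) (hbT : b ∉ T) (hN : IsMat N') (hNF : N' ⊆ E.filter (f · ∈ insert b T))
    (hD : (defects (q + 1) (E.filter (f · ∈ insert b T)) N').card ≤ 2) :
    Reach q E C f₀ N' (defects (q + 1) (E.filter (f · ∈ insert b T)) N').card := by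
  set U := insert b T with hU
  have hUc : U.card = q + 1 := by rw [hU, Finset.card_insert_of_notMem hbT, hTc]
  have hUC : U ⊆ C := Finset.insert_subset hb hT
  set F := E.filter (f · ∈ U) with hF
  have hFd : ∀ v, ec F v ≤ q + 1 := fun v => hUc ▸ hf.ec_filter_le U v
  have hLF : F \ N' ⊆ F := Finset.sdiff_subset
  obtain ⟨A, hAL, hA, hAc⟩ := exists_matching (L := F \ N')
    (hG.mono (hLF.trans (Finset.filter_subset _ _))) hq
    (fun v => (ec_mono hLF v).trans (hFd v)) hD
  have hd : ∀ v, ec (F \ A) v ≤ q := by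
    intro v
    have h₁ := ec_sdiff_add (hAL.trans hLF) v
    have h₂ := ec_sdiff_add hNF v
    have h₃ := ec_sdiff_add hAL v
    have h₄ := hAc v
    have h₅ := hFd v
    have h₆ := hN v
    by_cases h : q ≤ ec (F \ N') v
    · have := h₄ h
      omega
    · omega
  obtain ⟨f', hs, -, hH⟩ := exists_resplit hG hf hUC hUc (Finset.mem_insert_self b T) hA
    (hAL.trans hLF) hd
  have hUe : U.erase b = T := Finset.erase_insert hbT
  rw [hUe] at hH
  refine ⟨f', T, h₀.tail hs, hs.2.1, hT, hTc, ?_, hN, Finset.card_le_card ?_⟩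
  · rw [hH]
    intro e he
    refine Finset.mem_sdiff.2 ⟨hNF he, fun heA => ?_⟩
    exact (Finset.mem_sdiff.1 (hAL heA)).2 he
  · rw [hH]
    intro v
    simp only [defects, Finset.mem_filter, Finset.mem_univ, true_and]
    intro hv
    have hv : q ≤ ec ((F \ N') \ A) v := by rwa [sdiff_right_comm]
    have h₁ := ec_mono (Finset.sdiff_subset (s := F \ N') (t := A)) v
    have := hAc v (hv.trans h₁)
    omega

/-- The vertices matched to `u` by `N`. -/
noncomputable def partners [Fintype V] (N : Finset (Sym2 V)) (u : V) : Finset V :=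
  Finset.univ.filter (fun v => s(u, v) ∈ N)

lemma card_partners_le [Fintype V] {N : Finset (Sym2 V)} (hN : IsMat N) (u : V) :
    (partners N u).card ≤ 1 := by
  refine Finset.card_le_one.2 ?_
  intro a ha b hb
  simp only [partners, Finset.mem_filter, Finset.mem_univ, true_and] at ha hb
  have := hN.eq ha hb (Sym2.mem_mk_left u a) (Sym2.mem_mk_left u b)
  exact Sym2.congr_right.1 this

/-- After adding one more color class, a vertex of degree `q + 1` in `F - N'` is uncovered by `N'`
and was either already a defect or covered by `N`. -/
lemma defects_succ [Fintype V] {q : ℕ} {E : Finset (Sym2 V)} {C T : Finset ℕ} {f : Sym2 V → ℕ}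
    {b : ℕ} {N N' : Finset (Sym2 V)} (hf : ProperOn E C f) (hTc : T.card = q) (hbT : b ∉ T)
    (hNT : N ⊆ E.filter (f · ∈ T)) (hNF : N' ⊆ E.filter (f · ∈ insert b T)) {v : V}
    (hv : v ∈ defects (q + 1) (E.filter (f · ∈ insert b T)) N') :
    ec N' v = 0 ∧ (v ∈ defects q (E.filter (f · ∈ T)) N ∨ ∃ e ∈ N, v ∈ e) := by
  simp only [defects, Finset.mem_filter, Finset.mem_univ, true_and] at hv ⊢
  have h₁ := ec_sdiff_add hNF v
  have h₂ := hf.ec_filter_le (insert b T) v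
  rw [Finset.card_insert_of_notMem hbT, hTc] at h₂
  have h₃ : E.filter (f · ∈ T) ⊆ E.filter (f · ∈ insert b T) := by
    intro e
    simp only [Finset.mem_filter, Finset.mem_insert]
    tauto
  have h₄ := ec_sdiff_add h₃ v
  have h₅ : ec (E.filter (f · ∈ insert b T) \ E.filter (f · ∈ T)) v ≤ 1 := by
    refine (ec_mono ?_ v).trans (hf.isMat_class b v)
    intro e
    simp only [Finset.mem_filter, Finset.mem_insert, Finset.mem_sdiff]
    tauto
  have h₆ := ec_sdiff_add hNT v
  refine ⟨by omega, ?_⟩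
  rw [← ec_pos_iff]
  omega

lemma IsMat.insert_filter {N : Finset (Sym2 V)} (hN : IsMat N) (e : Sym2 V) :
    IsMat (insert e (N.filter (fun e' => ∀ x ∈ e, x ∉ e'))) := by
  refine isMat_of_eq ?_
  intro e₁ h₁ e₂ h₂ x hx₁ hx₂
  simp only [Finset.mem_insert, Finset.mem_filter] at h₁ h₂
  rcases h₁ with rfl | h₁ <;> rcases h₂ with rfl | h₂
  · rfl
  · exact absurd hx₂ (h₂.2 x hx₁)
  · exact absurd hx₁ (h₁.2 x hx₂)
  · exact hN.eq h₁.1 h₂.1 hx₁ hx₂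

/-- Inserting an edge `s(z, w)` of the target matching into `N`, and deleting the edges of `N` that
meet it. Apart from the old defects other than `z`, only the former partners of `z` and `w` can be
defects afterwards; there must be at most two such vertices. -/
lemma reach_insert [Fintype V] {q : ℕ} {E : Finset (Sym2 V)} {C T : Finset ℕ} {f₀ f : Sym2 V → ℕ}
    {N N₂ : Finset (Sym2 V)} (hG : Good q E) (hq : 3 ≤ q) (hC : q + 1 ≤ C.card)
    (hN₂ : IsMat N₂) (hN₂E : N₂ ⊆ E)
    (h₀ : Eqv E C (q + 1) f₀ f) (hf : ProperOn E C f) (hT : T ⊆ C) (hTc : T.card = q)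
    (hNT : N ⊆ E.filter (f · ∈ T)) (hN : IsMat N) {z w : V} (he₂ : s(z, w) ∈ N₂)
    (heN : s(z, w) ∉ N)
    (hD : ((defects q (E.filter (f · ∈ T)) N).erase z ∪ (partners N z ∪ partners N w)).card ≤ 2) :
    ∃ N' k, k ≤ 2 ∧ (symmDiff N' N₂).card < (symmDiff N N₂).card ∧ Reach q E C f₀ N' k := by
  obtain ⟨b, hbC, hbT, heb⟩ : ∃ b ∈ C, b ∉ T ∧ f s(z, w) ∈ insert b T := by
    by_cases h : f s(z, w) ∈ T
    · obtain ⟨b, hb, hb'⟩ := Finset.exists_mem_notMem_of_card_lt_card (s := T) (t := C) (by omega)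
      exact ⟨b, hb, hb', Finset.mem_insert_of_mem h⟩
    · exact ⟨_, hf.1 _ (hN₂E he₂), h, Finset.mem_insert_self _ _⟩
  set e : Sym2 V := s(z, w) with he
  set N' := insert e (N.filter (fun e' => ∀ x ∈ e, x ∉ e')) with hN'
  have hN'F : N' ⊆ E.filter (f · ∈ insert b T) := by
    refine Finset.insert_subset (Finset.mem_filter.2 ⟨hN₂E he₂, heb⟩) ?_
    intro e' he'
    have := Finset.mem_filter.1 (hNT (Finset.mem_filter.1 he').1)
    exact Finset.mem_filter.2 ⟨this.1, Finset.mem_insert_of_mem this.2⟩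
  have hsub : defects (q + 1) (E.filter (f · ∈ insert b T)) N' ⊆
      (defects q (E.filter (f · ∈ T)) N).erase z ∪ (partners N z ∪ partners N w) := by
    intro v hv
    obtain ⟨hv₀, hv₁⟩ := defects_succ hf hTc hbT hNT hN'F hv
    rw [ec_eq_zero_iff] at hv₀
    have hve : v ∉ e := hv₀ e (Finset.mem_insert_self _ _)
    have hvz : v ≠ z := fun h => hve (by rw [h, he]; exact Sym2.mem_mk_left z w)
    simp only [Finset.mem_union, Finset.mem_erase]
    rcases hv₁ with hv₁ | ⟨e', he', hve'⟩
    · exact Or.inl ⟨hvz, hv₁⟩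
    · right
      have : e' ∉ N' := fun h => hv₀ e' h hve'
      have : ∃ x ∈ e, x ∈ e' := by
        by_contra! h
        exact this (Finset.mem_insert_of_mem (Finset.mem_filter.2 ⟨he', h⟩))
      obtain ⟨x, hx, hx'⟩ := this
      have hxv : x ≠ v := fun h => hve (h ▸ hx)
      have hxe : e' = s(x, v) := (Sym2.mem_and_mem_iff hxv).1 ⟨hx', hve'⟩
      simp only [partners, Finset.mem_filter, Finset.mem_univ, true_and]
      rw [he, Sym2.mem_iff] at hx
      rcases hx with rfl | rfl
      · exact Or.inl (hxe ▸ he')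
      · exact Or.inr (hxe ▸ he')
  have hcard := (Finset.card_le_card hsub).trans hD
  refine ⟨N', _, hcard, ?_,
    reach_step hG hq h₀ hf hT hTc hbC hbT (by convert hN.insert_filter e) hN'F hcard⟩
  refine Finset.card_lt_card (Finset.ssubset_iff_of_subset ?_ |>.2 ⟨e, ?_, ?_⟩)
  · intro e'
    simp only [Finset.mem_symmDiff, hN', Finset.mem_insert, Finset.mem_filter]
    rintro (⟨h₁ | h₁, h₂⟩ | ⟨h₁, h₂⟩)
    · exact absurd (h₁ ▸ he₂) h₂
    · exact Or.inl ⟨h₁.1, h₂⟩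
    · right
      refine ⟨h₁, fun h => h₂ (Or.inr ⟨h, fun x hx hx' => h₂ (Or.inl ?_)⟩)⟩
      exact (hN₂.eq he₂ h₁ hx hx').symm
  · exact Finset.mem_symmDiff.2 (Or.inr ⟨he₂, heN⟩)
  · simp [Finset.mem_symmDiff, hN', he₂]

/-- A defect `z` which misses some color of `C` can be removed, by adding the class of a missing
color. -/
lemma reach_missing [Fintype V] {q : ℕ} {E : Finset (Sym2 V)} {C T : Finset ℕ} {f₀ f : Sym2 V → ℕ}
    {N : Finset (Sym2 V)} (hG : Good q E) (hq : 3 ≤ q)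
    (h₀ : Eqv E C (q + 1) f₀ f) (hf : ProperOn E C f) (hT : T ⊆ C) (hTc : T.card = q)
    (hNT : N ⊆ E.filter (f · ∈ T)) (hN : IsMat N) {z : V}
    (hz : z ∈ defects q (E.filter (f · ∈ T)) N) (hzC : ec E z < C.card)
    (hD : (defects q (E.filter (f · ∈ T)) N).card ≤ 2) :
    ∃ k, k < (defects q (E.filter (f · ∈ T)) N).card ∧ Reach q E C f₀ N k := by
  obtain ⟨b, hbC, hb⟩ := exists_missing f hzC
  have hzH : q ≤ ec (E.filter (f · ∈ T) \ N) z := by simpa [defects] using hz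
  have hzH' := hzH.trans (ec_mono Finset.sdiff_subset z)
  have hbT : b ∉ T := by
    intro hbT
    have h₁ := hf.ec_filter_le (T.erase b) z
    rw [Finset.card_erase_of_mem hbT, hTc] at h₁
    have h₂ : ec (E.filter (f · ∈ T)) z ≤ ec (E.filter (f · ∈ T.erase b)) z := by
      refine Finset.card_le_card ?_
      intro e
      simp only [Finset.mem_filter, Finset.mem_erase]
      rintro ⟨⟨h₁, h₂⟩, h₃⟩
      exact ⟨⟨h₁, hb e h₁ h₃, h₂⟩, h₃⟩
    omega
  have hNF : N ⊆ E.filter (f · ∈ insert b T) := by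
    intro e' he'
    have := Finset.mem_filter.1 (hNT he')
    exact Finset.mem_filter.2 ⟨this.1, Finset.mem_insert_of_mem this.2⟩
  have hlt : (defects (q + 1) (E.filter (f · ∈ insert b T)) N).card <
      (defects q (E.filter (f · ∈ T)) N).card := by
    refine Finset.card_lt_card (Finset.ssubset_iff_of_subset ?_ |>.2 ⟨z, hz, ?_⟩)
    · intro v hv
      obtain ⟨hv₀, hv₁⟩ := defects_succ hf hTc hbT hNT hNF hv
      rcases hv₁ with hv₁ | ⟨e', he', hve'⟩
      · exact hv₁
      · exact absurd hve' (ec_eq_zero_iff.1 hv₀ e' he')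
    · simp only [defects, Finset.mem_filter, Finset.mem_univ, true_and, not_le]
      have h₁ := ec_mono (Finset.sdiff_subset (s := E.filter (f · ∈ insert b T)) (t := N)) z
      have h₂ : ec (E.filter (f · ∈ insert b T)) z ≤ ec (E.filter (f · ∈ T)) z := by
        refine Finset.card_le_card ?_
        intro e
        simp only [Finset.mem_filter, Finset.mem_insert]
        rintro ⟨⟨h₁, h₂ | h₂⟩, h₃⟩
        · exact absurd h₂ (hb e h₁ h₃)
        · exact ⟨⟨h₁, h₂⟩, h₃⟩
      have h₃ := hf.ec_filter_le T z
      omega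
  exact ⟨_, hlt, reach_step hG hq h₀ hf hT hTc hbC hbT hN hNF (by omega)⟩

/-- Deleting an edge `e` from `N` when there are no defects. Only the ends of `e` can become
defects. -/
lemma reach_erase [Fintype V] {q : ℕ} {E : Finset (Sym2 V)} {C T : Finset ℕ} {f₀ f : Sym2 V → ℕ}
    {N : Finset (Sym2 V)} (hG : Good q E) (hq : 3 ≤ q) (hC : q + 1 ≤ C.card)
    (h₀ : Eqv E C (q + 1) f₀ f) (hf : ProperOn E C f) (hT : T ⊆ C) (hTc : T.card = q)
    (hNT : N ⊆ E.filter (f · ∈ T)) (hN : IsMat N) (e : Sym2 V)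
    (hD : defects q (E.filter (f · ∈ T)) N = ∅) :
    ∃ k, k ≤ 2 ∧ Reach q E C f₀ (N.erase e) k := by
  obtain ⟨b, hbC, hbT⟩ := Finset.exists_mem_notMem_of_card_lt_card (s := T) (t := C) (by omega)
  have hNF : N.erase e ⊆ E.filter (f · ∈ insert b T) := by
    intro e' he'
    have := Finset.mem_filter.1 (hNT (Finset.mem_of_mem_erase he'))
    exact Finset.mem_filter.2 ⟨this.1, Finset.mem_insert_of_mem this.2⟩
  have hcard : (defects (q + 1) (E.filter (f · ∈ insert b T)) (N.erase e)).card ≤ 2 := by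
    refine (Finset.card_le_card ?_).trans (card_mem_sym2_le e)
    intro v hv
    obtain ⟨hv₀, hv₁⟩ := defects_succ hf hTc hbT hNT hNF hv
    simp only [hD, Finset.notMem_empty, false_or] at hv₁
    obtain ⟨e', he', hve'⟩ := hv₁
    simp only [Finset.mem_filter, Finset.mem_univ, true_and]
    by_cases h : e' = e
    · exact h ▸ hve'
    · exact absurd hve' (ec_eq_zero_iff.1 hv₀ e' (Finset.mem_erase.2 ⟨h, he'⟩))
  exact ⟨_, hcard, reach_step hG hq h₀ hf hT hTc hbC hbT (hN.mono (Finset.erase_subset _ _))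
    hNF hcard⟩

/-- Any matching `N₂` that covers all vertices seeing every color can be reached without
defects. -/
lemma reach_target [Fintype V] {q : ℕ} {E : Finset (Sym2 V)} {C : Finset ℕ} {f₀ : Sym2 V → ℕ}
    {N₂ : Finset (Sym2 V)} (hG : Good q E) (hq : 3 ≤ q) (hC : q + 1 ≤ C.card)
    (hN₂ : IsMat N₂) (hN₂E : N₂ ⊆ E) (hN₂C : ∀ v, ec N₂ v = 0 → ec E v < C.card) (m : ℕ) :
    ∀ N k, k ≤ 2 → 3 * (symmDiff N N₂).card + k ≤ m → Reach q E C f₀ N k →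
      Reach q E C f₀ N₂ 0 := by
  induction m using Nat.strong_induction_on with
  | _ m ih =>
  rintro N k hk hm ⟨f, T, h₀, hf, hT, hTc, hNT, hN, hDk⟩
  have hD0 : ∀ v ∈ defects q (E.filter (f · ∈ T)) N, ec N v = 0 := by
    intro v hv
    have h₁ : q ≤ ec (E.filter (f · ∈ T) \ N) v := by simpa [defects] using hv
    have h₂ := ec_sdiff_add hNT v
    have h₃ := hf.ec_filter_le T v
    omega
  rcases (defects q (E.filter (f · ∈ T)) N).eq_empty_or_nonempty with hD | ⟨z, hz⟩
  · by_cases hsub : N₂ ⊆ N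
    · by_cases hsub' : N ⊆ N₂
      · have : N = N₂ := Finset.Subset.antisymm hsub' hsub
        subst this
        exact ⟨f, T, h₀, hf, hT, hTc, hNT, hN, by simp [hD]⟩
      · obtain ⟨e, heN, heN₂⟩ := Finset.not_subset.1 hsub'
        obtain ⟨k', hk', hR⟩ := reach_erase hG hq hC h₀ hf hT hTc hNT hN e hD
        have : (symmDiff (N.erase e) N₂).card < (symmDiff N N₂).card := by
          refine Finset.card_lt_card (Finset.ssubset_iff_of_subset ?_ |>.2 ⟨e, ?_, ?_⟩)
          · intro e'
            simp only [Finset.mem_symmDiff, Finset.mem_erase]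
            rintro (⟨⟨-, h₁⟩, h₂⟩ | ⟨h₁, h₂⟩)
            · exact Or.inl ⟨h₁, h₂⟩
            · exact absurd ⟨fun h => heN₂ (h ▸ h₁), hsub h₁⟩ h₂
          · simp [Finset.mem_symmDiff, heN, heN₂]
          · simp [Finset.mem_symmDiff, heN₂]
        exact ih (3 * (symmDiff (N.erase e) N₂).card + k') (by omega) _ k' hk' le_rfl hR
    · obtain ⟨e, heN₂, heN⟩ := Finset.not_subset.1 hsub
      induction e using Sym2.ind with
      | _ z w =>
      obtain ⟨N', k', hk', hlt, hR⟩ := reach_insert hG hq hC hN₂ hN₂E h₀ hf hT hTc hNT hN heN₂ heN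
        (by
          have h₁ := Finset.card_union_le (partners N z) (partners N w)
          have h₂ := card_partners_le hN z
          have h₃ := card_partners_le hN w
          simp only [hD, Finset.erase_empty, Finset.empty_union]
          omega)
      exact ih (3 * (symmDiff N' N₂).card + k') (by omega) _ k' hk' le_rfl hR
  · by_cases hz₂ : ec N₂ z = 0
    · obtain ⟨k', hk', hR⟩ := reach_missing hG hq h₀ hf hT hTc hNT hN hz (hN₂C z hz₂)
        (by omega)
      exact ih (3 * (symmDiff N N₂).card + k') (by omega) _ k' (by omega) le_rfl hR
    · obtain ⟨e, heN₂, hze⟩ := ec_pos_iff.1 (Nat.pos_of_ne_zero hz₂)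
      obtain ⟨w, rfl⟩ := Sym2.mem_iff_exists.1 hze
      have hzN := ec_eq_zero_iff.1 (hD0 z hz)
      have heN : s(z, w) ∉ N := fun h => hzN _ h hze
      have hpz : partners N z = ∅ := by
        simp only [partners, Finset.filter_eq_empty_iff, Finset.mem_univ, true_implies]
        exact fun v h => hzN _ h (Sym2.mem_mk_left z v)
      obtain ⟨N', k', hk', hlt, hR⟩ := reach_insert hG hq hC hN₂ hN₂E h₀ hf hT hTc hNT hN heN₂ heN
        (by
          have h₁ := Finset.card_union_le ((defects q (E.filter (f · ∈ T)) N).erase z)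
            (partners N w)
          have h₂ := Finset.card_erase_of_mem hz
          have h₃ := card_partners_le hN w
          simp only [hpz, Finset.empty_union]
          omega)
      exact ih (3 * (symmDiff N' N₂).card + k') (by omega) _ k' hk' le_rfl hR

/-! ### Equivalence of colorings in the class `𝒜(q)` -/

/-- The class of a color `t` can be transformed into the class of `t` in any other coloring. -/
lemma exists_eqv_class [Fintype V] {q : ℕ} {E : Finset (Sym2 V)} {C : Finset ℕ}
    {f g : Sym2 V → ℕ} {t : ℕ} (hG : Good q E) (hq : 3 ≤ q) (hC : q + 1 ≤ C.card)
    (hf : ProperOn E C f) (hg : ProperOn E C g) (ht : t ∈ C) :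
    ∃ f', Eqv E C (q + 1) f f' ∧ ProperOn E C f' ∧ ∀ e ∈ E, f' e = t ↔ g e = t := by
  set N₂ := E.filter (g · = t) with hN₂
  have hN₂M : IsMat N₂ := hg.isMat_class t
  have hN₂E : N₂ ⊆ E := Finset.filter_subset _ _
  have hN₂C : ∀ v, ec N₂ v = 0 → ec E v < C.card := by
    intro v hv
    have h₁ := hg.ec_filter_le (C.erase t) v
    have h₂ : ec E v ≤ ec (E.filter (g · ∈ C.erase t)) v := by
      refine Finset.card_le_card ?_
      intro e he
      simp only [Finset.mem_filter] at he
      simp only [Finset.mem_filter, Finset.mem_erase]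
      refine ⟨⟨he.1, fun h => ?_, hg.1 e he.1⟩, he.2⟩
      exact ec_eq_zero_iff.1 hv e (Finset.mem_filter.2 ⟨he.1, h⟩) he.2
    rw [Finset.card_erase_of_mem ht] at h₁
    omega
  obtain ⟨T₀, htT₀, hT₀, hT₀c⟩ := Finset.exists_subsuperset_card_eq
    (Finset.singleton_subset_iff.2 ht) (n := q) (by simp; omega) (by omega)
  rw [Finset.singleton_subset_iff] at htT₀
  have hstart : Reach q E C f (E.filter (f · = t)) 0 := by
    refine ⟨f, T₀, Relation.ReflTransGen.refl, hf, hT₀, hT₀c, ?_, hf.isMat_class t, ?_⟩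
    · intro e he
      rw [Finset.mem_filter] at he ⊢
      exact ⟨he.1, he.2 ▸ htT₀⟩
    · rw [Nat.le_zero, Finset.card_eq_zero, defects, Finset.filter_eq_empty_iff]
      intro v _
      have h₁ := hf.ec_filter_le (T₀.erase t) v
      have h₂ : ec (E.filter (f · ∈ T₀) \ E.filter (f · = t)) v ≤
          ec (E.filter (f · ∈ T₀.erase t)) v := by
        refine ec_mono ?_ v
        intro e
        simp only [Finset.mem_filter, Finset.mem_sdiff, Finset.mem_erase]
        tauto
      rw [Finset.card_erase_of_mem htT₀] at h₁
      omega
  obtain ⟨f₁, T, h₀, hf₁, hT, hTc, hNT, -, hD⟩ :=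
    reach_target hG hq hC hN₂M hN₂E hN₂C _ _ 0 (by omega) le_rfl hstart
  obtain ⟨b, hbC, hbT, htb⟩ : ∃ b ∈ C, b ∉ T ∧ t ∈ insert b T := by
    by_cases h : t ∈ T
    · obtain ⟨b, hb, hb'⟩ := Finset.exists_mem_notMem_of_card_lt_card (s := T) (t := C) (by omega)
      exact ⟨b, hb, hb', Finset.mem_insert_of_mem h⟩
    · exact ⟨_, ht, h, Finset.mem_insert_self _ _⟩
  have hNF : N₂ ⊆ E.filter (f₁ · ∈ insert b T) := by
    intro e' he'
    have := Finset.mem_filter.1 (hNT he')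
    exact Finset.mem_filter.2 ⟨this.1, Finset.mem_insert_of_mem this.2⟩
  have hd : ∀ v, ec (E.filter (f₁ · ∈ insert b T) \ N₂) v ≤ q := by
    intro v
    by_contra! hv
    obtain ⟨h₁, h₂⟩ := defects_succ (v := v) hf₁ hTc hbT hNT hNF
      (by simpa [defects] using hv)
    rw [Nat.le_zero, Finset.card_eq_zero] at hD
    rw [hD] at h₂
    rcases h₂ with h₂ | ⟨e, he, hve⟩
    · simp at h₂
    · exact ec_eq_zero_iff.1 h₁ e he hve
  obtain ⟨f', hs, hf', -⟩ := exists_resplit hG hf₁ (Finset.insert_subset hbC hT)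
    (by rw [Finset.card_insert_of_notMem hbT, hTc]) htb hN₂M hNF hd
  refine ⟨f', h₀.tail hs, hs.2.1, fun e he => ?_⟩
  rw [hf' e he, hN₂, Finset.mem_filter]
  simp [he]

lemma step_of_eq {E : Finset (Sym2 V)} {C : Finset ℕ} {n : ℕ} {f g : Sym2 V → ℕ}
    (hf : ProperOn E C f) (h : ∀ e ∈ E, f e = g e) : Step E C n f g := by
  refine ⟨hf, ⟨fun e he => h e he ▸ hf.1 e he, ?_⟩, ∅, by simp, fun e he j _ => by rw [h e he]⟩
  intro e₁ h₁ e₂ h₂ hne hx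
  rw [← h e₁ h₁, ← h e₂ h₂]
  exact hf.2 e₁ h₁ e₂ h₂ hne hx

/-- For graphs in `𝒜(q)`, any two proper colorings with the same color set are
`(q + 1)`-equivalent. The induction removes one color class at a time. -/
theorem eqv_of_good [Fintype V] {q : ℕ} (hq : 3 ≤ q) (n : ℕ) :
    ∀ (E : Finset (Sym2 V)) (C : Finset ℕ) (f g : Sym2 V → ℕ), C.card = n → Good q E →
      ProperOn E C f → ProperOn E C g → Eqv E C (q + 1) f g := by
  induction n with
  | zero =>
    intro E C f g hC _ hf hg
    refine Relation.ReflTransGen.single ⟨hf, hg, C, by omega, fun e he j hj => ?_⟩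
    exact ⟨fun h => absurd (h ▸ hf.1 e he) hj, fun h => absurd (h ▸ hg.1 e he) hj⟩
  | succ n ih =>
    intro E C f g hC hG hf hg
    by_cases hCq : C.card ≤ q + 1
    · refine Relation.ReflTransGen.single ⟨hf, hg, C, hCq, fun e he j hj => ?_⟩
      exact ⟨fun h => absurd (h ▸ hf.1 e he) hj, fun h => absurd (h ▸ hg.1 e he) hj⟩
    obtain ⟨t, ht⟩ : C.Nonempty := Finset.card_pos.1 (by omega)
    obtain ⟨f', hff', hf', hcl⟩ := exists_eqv_class hG hq (by omega) hf hg ht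
    set N := E.filter (g · = t) with hN
    have hNM : IsMat N := hg.isMat_class t
    have hfE : ∀ e ∈ E \ N, f' e ∈ C.erase t := by
      intro e he
      simp only [hN, Finset.mem_sdiff, Finset.mem_filter, not_and] at he
      exact Finset.mem_erase.2 ⟨fun h => he.2 he.1 ((hcl e he.1).1 h), hf'.1 e he.1⟩
    have hgE : ∀ e ∈ E \ N, g e ∈ C.erase t := by
      intro e he
      simp only [hN, Finset.mem_sdiff, Finset.mem_filter, not_and] at he
      exact Finset.mem_erase.2 ⟨fun h => he.2 he.1 h, hg.1 e he.1⟩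
    have key := ih (E \ N) (C.erase t) f' g (by rw [Finset.card_erase_of_mem ht, hC]; rfl)
      (hG.mono Finset.sdiff_subset) (hf'.mono Finset.sdiff_subset hfE)
      (hg.mono Finset.sdiff_subset hgE)
    have key' : Eqv E C (q + 1) (fun e => if e ∈ N then t else f' e)
        (fun e => if e ∈ N then t else g e) := by
      refine Relation.ReflTransGen.lift (fun φ e => if e ∈ N then t else φ e) ?_ _ _ key
      rintro φ φ' ⟨h₁, h₂, U, hU, hUE⟩
      have h₁' := h₁.extend_class hNM (Finset.notMem_erase t C)
      have h₂' := h₂.extend_class hNM (Finset.notMem_erase t C)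
      rw [Finset.insert_erase ht] at h₁' h₂'
      refine ⟨h₁', h₂', U, hU, fun e he j hj => ?_⟩
      by_cases heN : e ∈ N
      · simp [heN]
      · simpa [heN] using hUE e (by simp [he, heN]) j hj
    have s₁ : Step E C (q + 1) f' (fun e => if e ∈ N then t else f' e) := by
      refine step_of_eq hf' fun e he => ?_
      by_cases heN : e ∈ N
      · simp only [heN, if_true]
        exact (hcl e he).2 (Finset.mem_filter.1 heN).2
      · simp [heN]
    have s₂ : Step E C (q + 1) (fun e => if e ∈ N then t else g e) g := by
      refine step_of_eq (key'.cases_tail.elim (fun h => ?_) fun ⟨_, _, h⟩ => h.2.1) fun e he => ?_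
      · rw [h]
        exact s₁.2.1
      · by_cases heN : e ∈ N
        · simp only [heN, if_true]
          exact (Finset.mem_filter.1 heN).2.symm
        · simp [heN]
    exact ((hff'.tail s₁).trans key').tail s₂

/-! ### Kőnig's edge coloring theorem -/

/-- A square matrix of natural numbers whose line sums are all `q` is a sum of `q` permutation
matrices. -/
lemma exists_perms {n : Type*} [Fintype n] (q : ℕ) : ∀ M : n → n → ℕ,
    (∀ i, ∑ j, M i j = q) → (∀ j, ∑ i, M i j = q) →
    ∃ σ : ℕ → Equiv.Perm n, ∀ i j, M i j = ∑ k ∈ Finset.range q, if σ k i = j then 1 else 0 := by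
  induction q with
  | zero =>
    intro M hr _
    refine ⟨fun _ => 1, fun i j => ?_⟩
    have := Finset.sum_eq_zero_iff.1 (hr i) j (Finset.mem_univ j)
    simpa using this
  | succ q ih =>
    intro M hr hc
    -- Hall's condition for the support of `M`
    have hall : ∀ S : Finset n,
        S.card ≤ (S.biUnion fun i => Finset.univ.filter fun j => 0 < M i j).card := by
      intro S
      set T := S.biUnion fun i => Finset.univ.filter fun j => 0 < M i j with hT
      have h : S.card * (q + 1) ≤ T.card * (q + 1) := by
        calc S.card * (q + 1) = ∑ i ∈ S, ∑ j, M i j := by simp [hr]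
          _ = ∑ i ∈ S, ∑ j ∈ T, M i j := by
            refine Finset.sum_congr rfl fun i hi => ?_
            refine (Finset.sum_subset (Finset.subset_univ T) fun j _ hj => ?_).symm
            by_contra h
            exact hj (Finset.mem_biUnion.2 ⟨i, hi, by simpa using Nat.pos_of_ne_zero h⟩)
          _ = ∑ j ∈ T, ∑ i ∈ S, M i j := Finset.sum_comm
          _ ≤ ∑ j ∈ T, ∑ i, M i j := Finset.sum_le_sum fun j _ =>
            Finset.sum_le_sum_of_subset (Finset.subset_univ S)
          _ = T.card * (q + 1) := by simp [hc]
      exact Nat.le_of_mul_le_mul_right h (Nat.succ_pos q)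
    obtain ⟨τ, hτ, hτM⟩ := (Finset.all_card_le_biUnion_card_iff_exists_injective _).1 hall
    let π : Equiv.Perm n := Equiv.ofBijective τ (Finite.injective_iff_bijective.1 hτ)
    have hπ : ∀ i, 0 < M i (π i) := fun i => (Finset.mem_filter.1 (hτM i)).2
    have hM : ∀ i j, (M i j - if π i = j then 1 else 0) + (if π i = j then 1 else 0) = M i j := by
      intro i j
      split_ifs with h
      · have := hπ i
        rw [h] at this
        omega
      · rfl
    obtain ⟨σ, hσ⟩ := ih (fun i j => M i j - if π i = j then 1 else 0)
      (by
        intro i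
        have h₁ : ∑ j, ((M i j - if π i = j then 1 else 0) + (if π i = j then 1 else 0)) = q + 1 := by
          simp only [hM, hr]
        rw [Finset.sum_add_distrib] at h₁
        simpa using h₁)
      (by
        intro j
        have h₁ : ∑ i, ((M i j - if π i = j then 1 else 0) + (if π i = j then 1 else 0)) = q + 1 := by
          simp only [hM, hc]
        have h₂ : ∑ i, (if π i = j then 1 else 0) = 1 := by
          rw [Finset.sum_eq_single (π.symm j)]
          · simp
          · intro i _ hi
            rw [if_neg]
            rintro rfl
            simp at hi
          · simp
        rw [Finset.sum_add_distrib, h₂] at h₁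
        simpa using h₁)
    refine ⟨fun k => if k = q then π else σ k, fun i j => ?_⟩
    rw [Finset.sum_range_succ, ← hM i j, hσ i j]
    congr 1
    · refine Finset.sum_congr rfl fun k hk => ?_
      simp [(Finset.mem_range.1 hk).ne]
    · simp

/-- **Kőnig's theorem**: a bipartite graph (with parts `X` and its complement) of maximum degree at
most `q` is `q`-edge-colorable. -/
lemma exists_color_bipartite [Fintype V] {q : ℕ} {E : Finset (Sym2 V)} {X : Set V}
    (hE : ∀ e ∈ E, ∃ x ∈ X, ∃ y ∉ X, e = s(x, y)) (hd : ∀ v, ec E v ≤ q) :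
    ∃ f, ProperOn E (Finset.Icc 1 q) f := by
  let m : V → V → ℕ := fun x y => if x ∈ X ∧ y ∉ X ∧ s(x, y) ∈ E then 1 else 0
  have hrow : ∀ x, ∑ y, m x y ≤ q := by
    intro x
    refine le_trans ?_ (hd x)
    simp only [m, ← Finset.card_filter]
    refine Finset.card_le_card_of_injOn (fun y => s(x, y)) ?_ ?_
    · intro y hy
      simp only [Finset.coe_filter, Finset.mem_univ, true_and, Set.mem_ofPred_eq] at hy
      simp [hy.2.2]
    · intro y _ y' _ h
      exact Sym2.congr_right.1 h
  have hcol : ∀ y, ∑ x, m x y ≤ q := by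
    intro y
    refine le_trans ?_ (hd y)
    simp only [m, ← Finset.card_filter]
    refine Finset.card_le_card_of_injOn (fun x => s(x, y)) ?_ ?_
    · intro x hx
      simp only [Finset.coe_filter, Finset.mem_univ, true_and, Set.mem_ofPred_eq] at hx
      simp [hx.2.2]
    · intro x _ x' _ h
      exact Sym2.congr_left.1 h
  -- Two copies of the graph, joined so that all line sums become `q`.
  let M : V ⊕ V → V ⊕ V → ℕ := fun i j => match i, j with
    | .inl x, .inl y => m x y
    | .inl x, .inr x' => if x = x' then q - ∑ y, m x y else 0
    | .inr y, .inl y' => if y = y' then q - ∑ x, m x y else 0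
    | .inr y, .inr x => m x y
  obtain ⟨σ, hσ⟩ := exists_perms q M
    (by
      rintro (x | y)
      · have := hrow x
        simp only [M, Fintype.sum_sum_type, Finset.sum_ite_eq, Finset.mem_univ, if_true]
        omega
      · have := hcol y
        simp only [M, Fintype.sum_sum_type, Finset.sum_ite_eq, Finset.mem_univ, if_true]
        omega)
    (by
      rintro (y | x)
      · have := hcol y
        simp only [M, Fintype.sum_sum_type, Finset.sum_ite_eq', Finset.mem_univ, if_true]
        omega
      · have := hrow x
        simp only [M, Fintype.sum_sum_type, Finset.sum_ite_eq', Finset.mem_univ, if_true]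
        omega)
  have hk : ∀ e, ∃ k, e ∈ E → k < q ∧
      ∃ x ∈ X, ∃ y ∉ X, e = s(x, y) ∧ σ k (.inl x) = .inl y := by
    intro e
    by_cases he : e ∈ E
    · obtain ⟨x, hx, y, hy, rfl⟩ := hE e he
      have h₁ := hσ (.inl x) (.inl y)
      have h₂ : M (.inl x) (.inl y) = 1 := by simp [M, m, hx, hy, he]
      obtain ⟨k, hkq, hk⟩ := Finset.exists_ne_zero_of_sum_ne_zero
        (ne_of_eq_of_ne (h₁.symm.trans h₂) one_ne_zero)
      exact ⟨k, fun _ => ⟨Finset.mem_range.1 hkq, x, hx, y, hy, rfl, by simpa using hk⟩⟩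
    · exact ⟨0, fun h => absurd h he⟩
  choose k hk using hk
  refine ⟨fun e => k e + 1, fun e he => ?_, fun e₁ h₁ e₂ h₂ hne hz hf => hne ?_⟩
  · have := (hk e he).1
    simp only [Finset.mem_Icc]
    omega
  · obtain ⟨z, hz₁, hz₂⟩ := hz
    obtain ⟨-, x₁, hx₁, y₁, hy₁, rfl, hσ₁⟩ := hk e₁ h₁
    obtain ⟨-, x₂, hx₂, y₂, hy₂, rfl, hσ₂⟩ := hk e₂ h₂
    have hkk : k s(x₁, y₁) = k s(x₂, y₂) := Nat.succ_injective hf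
    rw [hkk] at hσ₁
    rw [Sym2.mem_iff] at hz₁ hz₂
    rcases hz₁ with rfl | rfl <;> rcases hz₂ with rfl | rfl
    · rw [hσ₁] at hσ₂
      rw [Sum.inl.inj hσ₂]
    · exact absurd hx₁ hy₂
    · exact absurd hx₂ hy₁
    · rw [← hσ₂] at hσ₁
      rw [Sum.inl.inj ((σ _).injective hσ₁)]

/-! ### From blocks to the whole graph -/

/-- Two colorings of edge sets that share only the vertex `x` can be combined, after permuting
the colors of one of them. -/
lemma exists_color_glue {q : ℕ} {E : Finset (Sym2 V)} {K : Set V} {x : V} {φ₁ φ₂ : Sym2 V → ℕ}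
    (hd : ec E x ≤ q) (hK : ∀ u v, s(u, v) ∈ E → u ∈ K → v ∈ K ∨ v = x)
    (h₁ : ProperOn (E.filter (fun e => ∃ v ∈ K, v ∈ e)) (Finset.Icc 1 q) φ₁)
    (h₂ : ProperOn (E \ E.filter (fun e => ∃ v ∈ K, v ∈ e)) (Finset.Icc 1 q) φ₂) :
    ∃ f, ProperOn E (Finset.Icc 1 q) f := by
  set E₁ := E.filter (fun e => ∃ v ∈ K, v ∈ e) with hE₁
  set S₁ := (E₁.filter (fun e => x ∈ e)).image φ₁ with hS₁
  set S₂ := ((E \ E₁).filter (fun e => x ∈ e)).image φ₂ with hS₂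
  have hc₁ : S₁.card ≤ ec E₁ x := Finset.card_image_le
  have hc₂ : S₂.card ≤ ec (E \ E₁) x := Finset.card_image_le
  have hc : ec (E \ E₁) x + ec E₁ x = ec E x := ec_sdiff_add (Finset.filter_subset _ _) x
  have hs₁ : S₁ ⊆ Finset.Icc 1 q := by
    intro c hc
    obtain ⟨e, he, rfl⟩ := Finset.mem_image.1 hc
    exact h₁.1 e (Finset.mem_filter.1 he).1
  have hs₂ : S₂ ⊆ Finset.Icc 1 q := by
    intro c hc
    obtain ⟨e, he, rfl⟩ := Finset.mem_image.1 hc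
    exact h₂.1 e (Finset.mem_filter.1 he).1
  obtain ⟨S, hSsub, hS⟩ := Finset.exists_subset_card_eq (s := Finset.Icc 1 q \ S₁) (n := S₂.card)
    (by
      rw [Finset.card_sdiff_of_subset hs₁, Nat.card_Icc]
      omega)
  have hSI : S ⊆ Finset.Icc 1 q := hSsub.trans Finset.sdiff_subset
  obtain ⟨σ₁, hσ₁, hi₁⟩ := exists_injOn_of_card hS.symm
  obtain ⟨σ₂, hσ₂, hi₂⟩ := exists_injOn_of_card (S := Finset.Icc 1 q \ S₂)
    (T := Finset.Icc 1 q \ S) (by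
      rw [Finset.card_sdiff_of_subset hs₂, Finset.card_sdiff_of_subset hSI, hS])
  have h₂' : ProperOn (E \ E₁) (Finset.Icc 1 q) ((fun c => if c ∈ S₂ then σ₁ c else σ₂ c) ∘ φ₂) := by
    refine h₂.comp_injOn ?_ ?_
    · intro c hc
      by_cases h : c ∈ S₂
      · simpa only [h, if_true] using hSI (hσ₁ c h)
      · simpa only [h, if_false] using Finset.sdiff_subset (hσ₂ c (Finset.mem_sdiff.2 ⟨hc, h⟩))
    · intro c hc d hd hcd
      rw [Finset.mem_coe] at hc hd
      by_cases h : c ∈ S₂ <;> by_cases h' : d ∈ S₂ <;> simp only [h, h', if_true, if_false] at hcd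
      · exact hi₁ h h' hcd
      · have := hσ₂ d (Finset.mem_sdiff.2 ⟨hd, h'⟩)
        rw [← hcd] at this
        exact absurd (hσ₁ c h) (Finset.mem_sdiff.1 this).2
      · have := hσ₂ c (Finset.mem_sdiff.2 ⟨hc, h⟩)
        rw [hcd] at this
        exact absurd (hσ₁ d h') (Finset.mem_sdiff.1 this).2
      · exact hi₂ (by simp only [Finset.coe_sdiff]; exact ⟨hc, h⟩)
          (by simp only [Finset.coe_sdiff]; exact ⟨hd, h'⟩) hcd
  have hcross : ∀ e₁ ∈ E₁, ∀ e₂ ∈ E \ E₁, (∃ z, z ∈ e₁ ∧ z ∈ e₂) →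
      φ₁ e₁ ≠ ((fun c => if c ∈ S₂ then σ₁ c else σ₂ c) ∘ φ₂) e₂ := by
    rintro e₁ he₁ e₂ he₂ ⟨z, hz₁, hz₂⟩
    obtain ⟨he₁E, u, huK, hu⟩ := Finset.mem_filter.1 he₁
    have hzK : z ∉ K := fun hzK => (Finset.mem_sdiff.1 he₂).2
      (Finset.mem_filter.2 ⟨(Finset.mem_sdiff.1 he₂).1, z, hzK, hz₂⟩)
    have huz : u ≠ z := fun h => hzK (h ▸ huK)
    have he : e₁ = s(u, z) := (Sym2.mem_and_mem_iff huz).1 ⟨hu, hz₁⟩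
    obtain rfl : z = x := (hK u z (he ▸ he₁E) huK).resolve_left hzK
    have hm₂ : φ₂ e₂ ∈ S₂ := Finset.mem_image_of_mem _ (Finset.mem_filter.2 ⟨he₂, hz₂⟩)
    have hm₁ : φ₁ e₁ ∈ S₁ := Finset.mem_image_of_mem _ (Finset.mem_filter.2 ⟨he₁, hz₁⟩)
    simp only [Function.comp, hm₂, if_true]
    intro h
    exact (Finset.mem_sdiff.1 (hSsub (hσ₁ _ hm₂))).2 (h ▸ hm₁)
  refine ⟨fun e => if e ∈ E₁ then φ₁ e else
    ((fun c => if c ∈ S₂ then σ₁ c else σ₂ c) ∘ φ₂) e, fun e he => ?_,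
    fun e₁ he₁ e₂ he₂ hne hz => ?_⟩
  · by_cases h : e ∈ E₁
    · simpa only [h, if_true] using h₁.1 e h
    · simpa only [h, if_false] using h₂'.1 e (Finset.mem_sdiff.2 ⟨he, h⟩)
  · by_cases h : e₁ ∈ E₁ <;> by_cases h' : e₂ ∈ E₁ <;> simp only [h, h', if_true, if_false]
    · exact h₁.2 e₁ h e₂ h' hne hz
    · exact hcross e₁ h e₂ (Finset.mem_sdiff.2 ⟨he₂, h'⟩) hz
    · exact (hcross e₂ h' e₁ (Finset.mem_sdiff.2 ⟨he₁, h⟩) (hz.imp fun _ => And.symm)).symm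
    · exact h₂'.2 e₁ (Finset.mem_sdiff.2 ⟨he₁, h⟩) e₂ (Finset.mem_sdiff.2 ⟨he₂, h'⟩) hne hz

/-- The subgraph formed by the edges in `E` and their ends. -/
def edgeSubgraph (G : SimpleGraph V) (E : Finset (Sym2 V)) (hE : ∀ e ∈ E, e ∈ G.edgeSet) :
    G.Subgraph where
  verts := {v | ∃ e ∈ E, v ∈ e}
  Adj a b := s(a, b) ∈ E
  adj_sub h := hE _ h
  edge_vert {v w} h := ⟨s(v, w), h, Sym2.mem_mk_left v w⟩
  symm := ⟨fun a b h => by rwa [Sym2.eq_swap]⟩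

/-- A nonempty edge set that cannot be split into two parts sharing at most one vertex lies in a
block. -/
lemma exists_block [Finite V] {G : SimpleGraph V} {E : Finset (Sym2 V)}
    (hE : ∀ e ∈ E, e ∈ G.edgeSet) (hne : E.Nonempty)
    (hns : ∀ (K : Set V) (x : V), (∀ u v, s(u, v) ∈ E → u ∈ K → v ∈ K ∨ v = x) →
      (∃ e ∈ E, ∃ v ∈ K, v ∈ e) → ∀ e ∈ E, ∃ v ∈ K, v ∈ e) :
    ∃ B : G.Subgraph, IsBlock G B ∧ ∀ a b, s(a, b) ∈ E → B.Adj a b := by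
  set B₀ := edgeSubgraph G E hE with hB₀
  have hadj : ∀ {a b}, s(a, b) ∈ E → B₀.Adj a b := fun h => h
  have hconn : B₀.coe.Connected := by
    obtain ⟨e₀, he₀⟩ := hne
    induction e₀ using Sym2.ind with
    | _ a c =>
    have ha : a ∈ B₀.verts := ⟨_, he₀, Sym2.mem_mk_left a c⟩
    let K : Set V := {v | ∃ hv : v ∈ B₀.verts, B₀.coe.Reachable ⟨a, ha⟩ ⟨v, hv⟩}
    have hKadj : ∀ u v, s(u, v) ∈ E → u ∈ K → v ∈ K := by
      rintro u v huv ⟨hu, hr⟩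
      refine ⟨⟨_, huv, Sym2.mem_mk_right u v⟩, hr.trans (SimpleGraph.Adj.reachable ?_)⟩
      exact hadj huv
    have hall := hns K a (fun u v huv hu => Or.inl (hKadj u v huv hu))
      ⟨_, he₀, a, ⟨ha, SimpleGraph.Reachable.refl _⟩, Sym2.mem_mk_left a c⟩
    have hr : ∀ b : B₀.verts, B₀.coe.Reachable ⟨a, ha⟩ b := by
      rintro ⟨b, e, he, hbe⟩
      obtain ⟨u, hu, hue⟩ := hall e he
      by_cases hub : u = b
      · subst hub
        exact hu.2
      · have : e = s(u, b) := (Sym2.mem_and_mem_iff hub).1 ⟨hue, hbe⟩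
        exact (hKadj u b (this ▸ he) hu).2
    exact (SimpleGraph.connected_iff_exists_forall_reachable _).2 ⟨_, hr⟩
  have hcut : ∀ x, ¬ IsCutVertex B₀.coe x := by
    rintro x ⟨a, b, hax, hbx, -, hp⟩
    let K : Set V := {v | ∃ (hv : v ∈ B₀.verts) (p : B₀.coe.Walk a ⟨v, hv⟩), x ∉ p.support}
    have hKadj : ∀ u v, s(u, v) ∈ E → u ∈ K → v ∈ K ∨ v = x := by
      rintro u v huv ⟨hu, p, hxp⟩
      by_cases hvx : v = x
      · exact Or.inr hvx
      · left
        have hv : v ∈ B₀.verts := ⟨_, huv, Sym2.mem_mk_right u v⟩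
        have huv' : B₀.coe.Adj ⟨u, hu⟩ ⟨v, hv⟩ := hadj huv
        refine ⟨hv, p.concat huv', ?_⟩
        rw [SimpleGraph.Walk.support_concat]
        simp only [List.mem_append, List.mem_singleton, not_or]
        exact ⟨hxp, fun h => hvx (by rw [h])⟩
    have haK : a.1 ∈ K := ⟨a.2, SimpleGraph.Walk.nil, by simpa using hax.symm⟩
    have hbK : b.1 ∉ K := fun ⟨_, p, hxp⟩ => hxp (hp p)
    obtain ⟨ea, hea, haea⟩ := a.2
    obtain ⟨eb, heb, hbeb⟩ := b.2
    obtain ⟨u, hu, hub⟩ := hns K x hKadj ⟨ea, hea, a.1, haK, haea⟩ eb heb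
    have hne : u ≠ b.1 := fun h => hbK (h ▸ hu)
    have : eb = s(u, b.1) := (Sym2.mem_and_mem_iff hne).1 ⟨hub, hbeb⟩
    rcases hKadj u b.1 (this ▸ heb) hu with h | h
    · exact hbK h
    · exact hbx (Subtype.ext h)
  obtain ⟨B, hB₀B, hB⟩ := (Set.toFinite
    {B : G.Subgraph | B.coe.Connected ∧ ∀ x, ¬ IsCutVertex B.coe x}).exists_le_maximal
    (a := B₀) ⟨hconn, hcut⟩
  refine ⟨B, ⟨hB.prop.1, hB.prop.2, fun B' hBB' h₁ h₂ => ?_⟩, fun a b h => hB₀B.2 (hadj h)⟩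
  exact le_antisymm (hB.le_of_ge ⟨h₁, h₂⟩ hBB') hBB'

/-- A set of edges of a subgraph `B ∈ 𝒜(q)` with all degrees at most `q` is `q`-edge-colorable. -/
lemma exists_color_memA [Fintype V] {q : ℕ} {G : SimpleGraph V} {B : G.Subgraph}
    {E : Finset (Sym2 V)} (hA : MemA q B.coe) (hEB : ∀ a b, s(a, b) ∈ E → B.Adj a b)
    (hd : ∀ v, ec E v ≤ q) : ∃ f, ProperOn E (Finset.Icc 1 q) f := by
  let H : SimpleGraph B.verts :=
    { Adj := fun a b => s(a.1, b.1) ∈ E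
      symm := ⟨fun a b h => by rwa [Sym2.eq_swap]⟩
      loopless := ⟨fun a h => (B.adj_sub (hEB _ _ h)).ne rfl⟩ }
  have hHB : H ≤ B.coe := fun a b h => hEB _ _ h
  have hH : maxDeg H ≤ q := by
    refine ciSup_le' fun x => (le_trans ?_ (hd x.1))
    rw [deg, ec, ← Set.ncard_coe_finset]
    refine Set.ncard_le_ncard_of_injOn (fun y => s(x.1, y.1)) ?_ ?_
    · intro y hy
      simp only [Finset.coe_filter, Set.mem_ofPred_eq]
      exact ⟨hy, Sym2.mem_mk_left _ _⟩
    · intro y _ y' _ h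
      exact Subtype.ext (Sym2.congr_right.1 h)
  obtain ⟨f, hf₁, hf₂⟩ := hA H hHB hH
  have hinj : Function.Injective (Sym2.map (Subtype.val : B.verts → V)) :=
    Sym2.map.injective Subtype.val_injective
  have hpre : ∀ e ∈ E, ∃ e' ∈ H.edgeSet, Sym2.map (Subtype.val : B.verts → V) e' = e := by
    intro e he
    induction e using Sym2.ind with
    | _ a b =>
    have hab := hEB a b he
    exact ⟨s(⟨a, B.edge_vert hab⟩, ⟨b, B.edge_vert hab.symm⟩), he, rfl⟩
  refine ⟨Function.extend (Sym2.map (Subtype.val : B.verts → V)) f 0, fun e he => ?_,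
    fun e₁ h₁ e₂ h₂ hne hx => ?_⟩
  · obtain ⟨e', he', rfl⟩ := hpre e he
    rw [hinj.extend_apply]
    exact hf₁ e' he'
  · obtain ⟨e₁', h₁', rfl⟩ := hpre e₁ h₁
    obtain ⟨e₂', h₂', rfl⟩ := hpre e₂ h₂
    rw [hinj.extend_apply, hinj.extend_apply]
    refine hf₂ e₁' h₁' e₂' h₂' (fun h => hne (by rw [h])) ?_
    obtain ⟨x, hx₁, hx₂⟩ := hx
    obtain ⟨y, hy, rfl⟩ := Sym2.mem_map.1 hx₁
    obtain ⟨y', hy', hyy⟩ := Sym2.mem_map.1 hx₂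
    exact ⟨y, hy, Subtype.ext hyy ▸ hy'⟩

/-- A set of edges of a bipartite subgraph with all degrees at most `q` is `q`-edge-colorable. -/
lemma exists_color_colorable [Fintype V] {q : ℕ} {G : SimpleGraph V} {B : G.Subgraph}
    {E : Finset (Sym2 V)} (hB : B.coe.Colorable 2) (hEB : ∀ a b, s(a, b) ∈ E → B.Adj a b)
    (hd : ∀ v, ec E v ≤ q) : ∃ f, ProperOn E (Finset.Icc 1 q) f := by
  obtain ⟨c⟩ := hB
  refine exists_color_bipartite (X := {v | ∃ hv : v ∈ B.verts, c ⟨v, hv⟩ = 0}) ?_ hd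
  intro e he
  induction e using Sym2.ind with
  | _ a b =>
  have hab := hEB a b he
  have ha := B.edge_vert hab
  have hb := B.edge_vert hab.symm
  have hc : c ⟨a, ha⟩ ≠ c ⟨b, hb⟩ := c.valid (v := ⟨a, ha⟩) (w := ⟨b, hb⟩) hab
  by_cases h : c ⟨a, ha⟩ = 0
  · exact ⟨a, ⟨ha, h⟩, b, fun ⟨_, h'⟩ => hc (h.trans h'.symm), rfl⟩
  · have h' : c ⟨b, hb⟩ = 0 := by omega
    exact ⟨b, ⟨hb, h'⟩, a, fun ⟨_, h''⟩ => h h'', Sym2.eq_swap⟩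

/-- If every block of `G` is bipartite or belongs to `𝒜(q)`, then `G` belongs to `𝒜(q)`. -/
lemma good_of_blocks [Fintype V] {q : ℕ} {G : SimpleGraph V}
    (hB : ∀ B : G.Subgraph, IsBlock G B → B.coe.Colorable 2 ∨ MemA q B.coe)
    (E₀ : Finset (Sym2 V)) (hE₀ : ∀ e ∈ E₀, e ∈ G.edgeSet) : Good q E₀ := by
  suffices h : ∀ n, ∀ E : Finset (Sym2 V), E.card = n → (∀ e ∈ E, e ∈ G.edgeSet) →
      (∀ v, ec E v ≤ q) → ∃ f, ProperOn E (Finset.Icc 1 q) f from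
    fun E hE hd => h _ E rfl (fun e he => hE₀ e (hE he)) hd
  intro n
  induction n using Nat.strong_induction_on with
  | _ n ih =>
  intro E hn hE hd
  rcases E.eq_empty_or_nonempty with rfl | hne
  · exact ⟨0, by simp [ProperOn]⟩
  by_cases hns : ∀ (K : Set V) (x : V), (∀ u v, s(u, v) ∈ E → u ∈ K → v ∈ K ∨ v = x) →
      (∃ e ∈ E, ∃ v ∈ K, v ∈ e) → ∀ e ∈ E, ∃ v ∈ K, v ∈ e
  · obtain ⟨B, hBl, hEB⟩ := exists_block hE hne hns
    rcases hB B hBl with h | h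
    · exact exists_color_colorable h hEB hd
    · exact exists_color_memA h hEB hd
  · push Not at hns
    obtain ⟨K, x, hK, ⟨e, he, v, hvK, hve⟩, e', he', he'K⟩ := hns
    set E₁ := E.filter (fun e => ∃ v ∈ K, v ∈ e) with hE₁
    have hsub : E₁ ⊆ E := Finset.filter_subset _ _
    have hlt₁ : E₁.card < n := by
      rw [← hn]
      refine Finset.card_lt_card ((Finset.ssubset_iff_of_subset hsub).2 ⟨e', he', ?_⟩)
      rintro h
      obtain ⟨-, u, hu, hue⟩ := Finset.mem_filter.1 h
      exact he'K u hu hue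
    have hlt₂ : (E \ E₁).card < n := by
      rw [← hn]
      refine Finset.card_lt_card ((Finset.ssubset_iff_of_subset Finset.sdiff_subset).2
        ⟨e, he, fun h => (Finset.mem_sdiff.1 h).2 ?_⟩)
      exact Finset.mem_filter.2 ⟨he, v, hvK, hve⟩
    obtain ⟨φ₁, h₁⟩ := ih _ hlt₁ E₁ rfl (fun e he => hE e (hsub he))
      (fun v => (ec_mono hsub v).trans (hd v))
    obtain ⟨φ₂, h₂⟩ := ih _ hlt₂ (E \ E₁) rfl (fun e he => hE e (Finset.sdiff_subset he))
      (fun v => (ec_mono Finset.sdiff_subset v).trans (hd v))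
    exact exists_color_glue (hd x) hK (by convert h₁) (by convert h₂)

/-! ### Translation to colorings of `G` -/

/-- `n`-equivalence of colorings of the edge set of `G` is `n`-equivalence of colorings of `G`. -/
lemma Eqv.nEquiv {G : SimpleGraph V} {E : Finset (Sym2 V)} (hE : ∀ e, e ∈ E ↔ e ∈ G.edgeSet)
    {t n : ℕ} {f g : Sym2 V → ℕ} (hf : ProperOn E (Finset.Icc 1 t) f)
    (h : Eqv E (Finset.Icc 1 t) n f g) : NEquiv G t n f g := by
  have hprop : ∀ f, ProperOn E (Finset.Icc 1 t) f → IsProperEdgeColoring G t f := fun f hf =>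
    ⟨fun e he => hf.1 e ((hE e).2 he),
      fun e₁ h₁ e₂ h₂ => hf.2 e₁ ((hE e₁).2 h₁) e₂ ((hE e₂).2 h₂)⟩
  induction h with
  | refl =>
    refine ⟨1, fun _ => f, le_rfl, rfl, rfl, fun _ _ => hprop f hf, fun _ _ => ?_⟩
    simp [DifferAtMost]
  | @tail g g' _ hs ih =>
    obtain ⟨k, F, hk, hF₀, hFk, hFp, hFd⟩ := ih
    obtain ⟨-, hg', U, hU, hUE⟩ := hs
    refine ⟨k + 1, fun i => if i ≤ k then F i else g', by omega, by simp [hF₀], by simp, ?_, ?_⟩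
    · intro i _
      by_cases hi : i ≤ k
      · simpa [hi] using hFp i hi
      · simpa [hi] using hprop g' hg'
    · intro i hi
      rcases Nat.lt_succ_iff_lt_or_eq.1 hi with hi | rfl
      · have h₁ : i ≤ k := hi.le
        have h₂ : i + 1 ≤ k := hi
        simpa only [h₁, h₂, if_true] using hFd i hi
      · have h₂ : ¬ i + 1 ≤ i := by omega
        simp only [le_refl, h₂, if_true, if_false, hFk]
        refine le_trans (Set.ncard_le_ncard (t := ↑U) ?_ U.finite_toSet) ?_
        · intro j hj
          by_contra hjU
          refine hj (Set.ext fun e => ?_)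
          simp only [colorClass, Set.mem_ofPred_eq]
          exact and_congr_right fun he => hUE e ((hE e).2 he) j hjU
        · rwa [Set.ncard_coe_finset]

end EdgeSets




/-- If `q ≥ 3` and `G` is a Class 1 graph with `Δ(G) ≥ 5` in which every block
is either bipartite or a `(q+1)`-degenerate graph from `𝒜(q)`, then `χ'_trans(G) ≤ q + 1`,
i.e. any two proper `χ'(G)`-edge-colorings of `G` are `(q+1)`-equivalent. -/
theorem edge_chromatic_transformation_index_le_of_blocks
    {V : Type*} [Fintype V] (q : ℕ) (hq : 3 ≤ q) (G : SimpleGraph V)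
    (hClass1 : chromIdx G = maxDeg G) (hΔ : 5 ≤ maxDeg G)
    (hblocks : ∀ B : G.Subgraph, IsBlock G B →
      B.coe.Colorable 2 ∨ (Degenerate (q + 1) B.coe ∧ MemA q B.coe)) :
    transIdx G ≤ q + 1 ∧
    ∀ f g, IsProperEdgeColoring G (chromIdx G) f → IsProperEdgeColoring G (chromIdx G) g →
      NEquiv G (chromIdx G) (q + 1) f g := by
  have key : ∀ f g, IsProperEdgeColoring G (chromIdx G) f →
      IsProperEdgeColoring G (chromIdx G) g → NEquiv G (chromIdx G) (q + 1) f g := by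
    intro f g hf hg
    set E := G.edgeSet.toFinite.toFinset with hEdef
    have hE : ∀ e, e ∈ E ↔ e ∈ G.edgeSet := fun e => Set.Finite.mem_toFinset _
    have hprop : ∀ f, IsProperEdgeColoring G (chromIdx G) f →
        ProperOn E (Finset.Icc 1 (chromIdx G)) f := fun f hf =>
      ⟨fun e he => hf.1 e ((hE e).1 he),
        fun e₁ h₁ e₂ h₂ => hf.2 e₁ ((hE e₁).1 h₁) e₂ ((hE e₂).1 h₂)⟩
    have hG : Good q E :=
      good_of_blocks (fun B hB => (hblocks B hB).imp_right And.right) E fun e he => (hE e).1 he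
    exact (eqv_of_good hq _ E _ f g rfl hG (hprop f hf) (hprop g hg)).nEquiv hE (hprop f hf)
  exact ⟨Nat.sInf_le ⟨by omega, key⟩, key⟩


end EdgeTrans
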